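/- arXiv:2104.11748 — 8 statements merged into one kernel-verified Lean document; each statement's English description precedes it below -/
import Mathlib

section
/- For every κ > 0 and every real-valued Schwartz function q on ℝ, both sides of the following identity are finite and equal: ∬_{ℝ×ℝ} ((2κ)^{-1} e^{-κ|x-y|})² q(x) q(y) dx dy = κ^{-1} ∫_ℝ |q̂(ξ)|² / (ξ² + 4κ²) dξ. (The left-hand side is the squared Hilbert–Schmidt norm of the operator √R₀(κ) q √R₀(κ), where R₀(κ) = (−∂² + κ²)^{-1} has integral kernel (2κ)^{-1} e^{-κ|x-y|}; the right-hand side is κ^{-1}‖q‖²_{H^{-1}_κ}.) -/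
open MeasureTheory

/-- The Fourier transform with the paper's normalization:
`f̂(ξ) = (2π)^{-1/2} ∫ e^{-iξx} f(x) dx`. -/
noncomputable def ft (f : ℝ → ℂ) (ξ : ℝ) : ℂ :=
  (Real.sqrt (2 * Real.pi) : ℂ)⁻¹ * ∫ x : ℝ, Complex.exp (-(Complex.I * (ξ : ℂ) * (x : ℂ))) * f x


lemma aux_h_int {a : ℝ} (ha : 0 < a) : Integrable (fun ξ : ℝ => (ξ ^ 2 + a ^ 2)⁻¹) := by
  have h := (integrable_inv_one_add_sq.comp_div ha.ne').const_mul (a ^ 2)⁻¹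
  refine h.congr (Filter.Eventually.of_forall fun ξ => ?_)
  have : 0 < ξ ^ 2 + a ^ 2 := by positivity
  have : 0 < 1 + (ξ / a) ^ 2 := by positivity
  simp only
  rw [← mul_inv]
  congr 1
  field_simp
  ring

lemma aux_g_int {a : ℝ} (ha : 0 < a) : Integrable (fun x : ℝ => (Real.exp (-a * |x|) : ℂ)) := by
  have h : Integrable (fun x : ℝ => Real.exp (-a * |x|)) := by
    have h1 := integrableOn_exp_mul_Ioi (a := -a) (by linarith) 0
    have h2 := integrableOn_exp_mul_Iic (a := a) ha 0
    rw [← integrableOn_univ, ← Set.Iic_union_Ioi (a := (0:ℝ))]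
    refine IntegrableOn.union ?_ ?_
    · refine h2.congr_fun (fun x hx => ?_) measurableSet_Iic
      simp only
      rw [abs_of_nonpos hx]; ring_nf
    · refine h1.congr_fun (fun x hx => ?_) measurableSet_Ioi
      simp only
      rw [abs_of_pos hx]
  exact h.ofReal

open FourierTransform in
lemma aux_fourier {a : ℝ} (ha : 0 < a) (w : ℝ) :
    𝓕 (fun x : ℝ => (Real.exp (-a * |x|) : ℂ)) w
      = 2 * a * (((2 * Real.pi * w) ^ 2 + a ^ 2)⁻¹ : ℝ) := by
  rw [Real.fourier_real_eq_integral_exp_smul]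
  have hint : Integrable (fun v : ℝ => Complex.exp (↑(-2 * Real.pi * v * w) * Complex.I) • (Real.exp (-a * |v|) : ℂ)) := by
    refine (aux_g_int ha).bdd_mul (c := 1) (by fun_prop) ?_
    exact Filter.Eventually.of_forall fun v => by rw [Complex.norm_exp_ofReal_mul_I]
  rw [← integral_add_compl (s := Set.Iic (0:ℝ)) measurableSet_Iic hint, Set.compl_Iic]
  set b : ℂ := a - 2 * Real.pi * w * Complex.I with hb
  set c : ℂ := -a - 2 * Real.pi * w * Complex.I with hc
  have hbr : b.re = a := by simp [hb]
  have hcr : c.re = -a := by simp [hc]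
  have e1 : ∫ v in Set.Iic (0:ℝ), Complex.exp (↑(-2 * Real.pi * v * w) * Complex.I) • (Real.exp (-a * |v|) : ℂ) = ∫ v in Set.Iic (0:ℝ), Complex.exp (b * v) := by
    refine setIntegral_congr_fun measurableSet_Iic fun v hv => ?_
    simp only [smul_eq_mul]
    rw [abs_of_nonpos hv, Complex.ofReal_exp, ← Complex.exp_add]
    congr 1
    push_cast [hb]; ring
  have e2 : ∫ v in Set.Ioi (0:ℝ), Complex.exp (↑(-2 * Real.pi * v * w) * Complex.I) • (Real.exp (-a * |v|) : ℂ) = ∫ v in Set.Ioi (0:ℝ), Complex.exp (c * v) := by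
    refine setIntegral_congr_fun measurableSet_Ioi fun v hv => ?_
    simp only [smul_eq_mul]
    rw [abs_of_pos hv, Complex.ofReal_exp, ← Complex.exp_add]
    congr 1
    push_cast [hc]; ring
  rw [e1, e2, integral_exp_mul_complex_Iic (by rw [hbr]; exact ha),
    integral_exp_mul_complex_Ioi (by rw [hcr]; linarith)]
  have hb0 : b ≠ 0 := fun h => by rw [h] at hbr; simp at hbr; linarith
  have hc0 : c ≠ 0 := fun h => by rw [h] at hcr; simp at hcr; linarith
  have hd : (((2 * Real.pi * w) ^ 2 + a ^ 2 : ℝ) : ℂ) = -(b * c) := by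
    push_cast [hb, hc]
    ring_nf
    simp
  rw [Complex.ofReal_inv, hd]
  have : 2 * (a:ℂ) = b - c := by rw [hb, hc]; ring
  rw [this]
  simp
  field_simp
  ring

open FourierTransform in
lemma aux_inv {a : ℝ} (ha : 0 < a) (x : ℝ) :
    ∫ ξ : ℝ, Complex.exp (Complex.I * ξ * x) * ((ξ ^ 2 + a ^ 2)⁻¹ : ℝ)
      = (Real.pi / a : ℝ) * (Real.exp (-a * |x|) : ℂ) := by
  have hpi := Real.pi_pos
  have hF : 𝓕 (fun x : ℝ => (Real.exp (-a * |x|) : ℂ))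
      = fun w => 2 * (a:ℂ) * (((2 * Real.pi * w) ^ 2 + a ^ 2)⁻¹ : ℝ) := funext (aux_fourier ha)
  have hFi : Integrable (𝓕 (fun x : ℝ => (Real.exp (-a * |x|) : ℂ))) := by
    rw [hF]
    exact (((aux_h_int ha).comp_mul_left' (by positivity : 2 * Real.pi ≠ 0)).ofReal).const_mul _
  have key := (aux_g_int ha).fourierInv_fourier_eq hFi (v := x) (by fun_prop)
  rw [Real.fourierInv_eq', hF] at key
  simp only at key
  rw [← key]
  have := Measure.integral_comp_mul_left (fun ξ : ℝ => Complex.exp (Complex.I * ξ * x) * ((ξ ^ 2 + a ^ 2)⁻¹ : ℝ)) (2 * Real.pi)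
  have e : (∫ v : ℝ, Complex.exp (↑(2 * Real.pi * inner ℝ v x) * Complex.I) • (2 * (a:ℂ) * (((2 * Real.pi * v) ^ 2 + a ^ 2)⁻¹ : ℝ)))
     = 2 * a * ∫ v : ℝ, Complex.exp (Complex.I * (2 * Real.pi * v : ℝ) * x) * (((2 * Real.pi * v) ^ 2 + a ^ 2)⁻¹ : ℝ) := by
    rw [← integral_const_mul]
    congr 1
    ext v
    have : Complex.exp (↑(2 * Real.pi * inner ℝ v x) * Complex.I) = Complex.exp (Complex.I * (2 * Real.pi * v : ℝ) * x) := by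
      congr 1
      simp
      ring
    rw [this, smul_eq_mul]
    ring
  rw [e, this, abs_of_pos (by positivity), Complex.real_smul]
  have h1 : (a:ℂ) ≠ 0 := by exact_mod_cast ha.ne'
  have h2 : (Real.pi:ℂ) ≠ 0 := by exact_mod_cast hpi.ne'
  generalize (∫ ξ : ℝ, Complex.exp (Complex.I * ξ * x) * ((ξ ^ 2 + a ^ 2)⁻¹ : ℝ)) = J
  push_cast
  field_simp

/-- For κ > 0 and real Schwartz `q`, the squared Hilbert–Schmidt norm of
`√R₀(κ) q √R₀(κ)` equals `κ⁻¹ ‖q‖²_{H^{-1}_κ}`; both sides are finite and equal. -/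
theorem stmt0 (κ : ℝ) (hκ : 0 < κ) (q : SchwartzMap ℝ ℝ) :
    Integrable (fun p : ℝ × ℝ =>
      ((2 * κ)⁻¹ * Real.exp (-κ * |p.1 - p.2|)) ^ 2 * q p.1 * q p.2) ∧
    Integrable (fun ξ : ℝ => ‖ft (fun x => (q x : ℂ)) ξ‖ ^ 2 / (ξ ^ 2 + 4 * κ ^ 2)) ∧
    (∫ p : ℝ × ℝ, ((2 * κ)⁻¹ * Real.exp (-κ * |p.1 - p.2|)) ^ 2 * q p.1 * q p.2) =
      κ⁻¹ * ∫ ξ : ℝ, ‖ft (fun x => (q x : ℂ)) ξ‖ ^ 2 / (ξ ^ 2 + 4 * κ ^ 2) := by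
  have hpi := Real.pi_pos
  have ha : 0 < 2 * κ := by positivity
  have hq : Integrable (q : ℝ → ℝ) := q.integrable
  have hqq : Integrable (fun p : ℝ × ℝ => ((q p.1 : ℂ) * (q p.2 : ℂ))) :=
    (hq.ofReal (𝕜 := ℂ)).mul_prod (hq.ofReal (𝕜 := ℂ))
  have hqr : Integrable (fun p : ℝ × ℝ => (q p.1 * q p.2)) := hq.mul_prod hq
  have hqc : Continuous q := q.continuous
  set F : (ℝ × ℝ) × ℝ → ℂ := fun z => Complex.exp (Complex.I * z.2 * (z.1.1 - z.1.2 : ℝ)) *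
    (((q z.1.1 : ℂ) * (q z.1.2 : ℂ)) * ((z.2 ^ 2 + (2 * κ) ^ 2)⁻¹ : ℝ)) with hFdef
  have hF : Integrable F (volume.prod volume) := by
    refine (hqq.mul_prod ((aux_h_int ha).ofReal (𝕜 := ℂ))).bdd_mul (c := 1) (by fun_prop) ?_
    refine Filter.Eventually.of_forall fun z => ?_
    have : Complex.I * z.2 * (z.1.1 - z.1.2 : ℝ) = ((z.2 * (z.1.1 - z.1.2) : ℝ) : ℂ) * Complex.I := by
      push_cast; ring
    rw [this, Complex.norm_exp_ofReal_mul_I]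
  have hL : ∀ p : ℝ × ℝ, ∫ ξ, F (p, ξ) = ((4 * Real.pi * κ / 2 * 1 : ℝ) : ℂ) * 
      ((((2 * κ)⁻¹ * Real.exp (-κ * |p.1 - p.2|)) ^ 2 * q p.1 * q p.2 : ℝ) : ℂ) := by
    intro p
    have : ∀ ξ : ℝ, F (p, ξ) = ((q p.1 : ℂ) * (q p.2 : ℂ)) * (Complex.exp (Complex.I * ξ * (p.1 - p.2 : ℝ)) * ((ξ ^ 2 + (2 * κ) ^ 2)⁻¹ : ℝ)) := by
      intro ξ
      simp only [hFdef]
      ring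
    simp_rw [this]
    rw [integral_const_mul, aux_inv ha]
    have h3 : Real.exp (-(2 * κ) * |p.1 - p.2|) = Real.exp (-κ * |p.1 - p.2|) ^ 2 := by
      rw [← Real.exp_nat_mul]; congr 1; push_cast; ring
    rw [h3]
    norm_cast
    field_simp
    try ring
  have hR : ∀ ξ : ℝ, ∫ p : ℝ × ℝ, F (p, ξ) = ((2 * Real.pi : ℝ) : ℂ) *
      ((‖ft (fun x => (q x : ℂ)) ξ‖ ^ 2 / (ξ ^ 2 + 4 * κ ^ 2) : ℝ) : ℂ) := by
    intro ξ
    set A : ℂ := ∫ x : ℝ, Complex.exp (-(Complex.I * (ξ : ℂ) * (x : ℂ))) * q x with hA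
    have hconj : ∫ x : ℝ, Complex.exp (Complex.I * (ξ : ℂ) * (x : ℂ)) * q x = (starRingEnd ℂ) A := by
      rw [hA, ← integral_conj]
      congr 1
      ext x
      rw [map_mul, ← Complex.exp_conj]
      simp
    have : ∀ p : ℝ × ℝ, F (p, ξ) = ((ξ ^ 2 + (2 * κ) ^ 2)⁻¹ : ℝ) * ((Complex.exp (Complex.I * (ξ : ℂ) * (p.1 : ℂ)) * q p.1) * (Complex.exp (-(Complex.I * (ξ : ℂ) * (p.2 : ℂ))) * q p.2)) := by
      intro p
      have : Complex.exp (Complex.I * ξ * (p.1 - p.2 : ℝ)) = Complex.exp (Complex.I * (ξ : ℂ) * (p.1 : ℂ)) * Complex.exp (-(Complex.I * (ξ : ℂ) * (p.2 : ℂ))) := by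
        rw [← Complex.exp_add]; congr 1; push_cast; ring
      simp only [hFdef]
      rw [this]
      ring
    simp_rw [this]
    rw [integral_const_mul]
    have hprod := integral_prod_mul (μ := (volume : Measure ℝ)) (ν := (volume : Measure ℝ))
      (fun x : ℝ => Complex.exp (Complex.I * (ξ : ℂ) * (x : ℂ)) * (q x : ℂ))
      (fun x : ℝ => Complex.exp (-(Complex.I * (ξ : ℂ) * (x : ℂ))) * (q x : ℂ))
    rw [Measure.volume_eq_prod, hprod, hconj, ← hA, ← Complex.normSq_eq_conj_mul_self, Complex.normSq_eq_norm_sq]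
    have hft : ‖ft (fun x => (q x : ℂ)) ξ‖ ^ 2 = (2 * Real.pi)⁻¹ * ‖A‖ ^ 2 := by
      rw [ft, ← hA, norm_mul, mul_pow, norm_inv, inv_pow, Complex.norm_real, Real.norm_eq_abs, sq_abs,
        Real.sq_sqrt (by positivity)]
    rw [hft]
    norm_cast
    field_simp
    try ring
  have i1 := hF.integral_prod_left
  have i2 := hF.integral_prod_right
  have sw := integral_integral_swap (f := fun p ξ => F (p, ξ)) hF
  simp_rw [hL] at i1 sw
  simp_rw [hR] at i2 sw
  refine ⟨?_, ?_, ?_⟩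
  · have := (i1.const_mul ((4 * Real.pi * κ / 2 * 1 : ℝ) : ℂ)⁻¹).re
    refine this.congr (Filter.Eventually.of_forall fun p => ?_)
    simp only
    rw [inv_mul_cancel_left₀ (by norm_cast; positivity)]
    exact Complex.ofReal_re _
  · have := (i2.const_mul ((2 * Real.pi : ℝ) : ℂ)⁻¹).re
    refine this.congr (Filter.Eventually.of_forall fun p => ?_)
    simp only
    rw [inv_mul_cancel_left₀ (by norm_cast; positivity)]
    exact Complex.ofReal_re _
  · rw [integral_const_mul, integral_const_mul, integral_complex_ofReal, integral_complex_ofReal] at sw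
    norm_cast at sw
    generalize (∫ p : ℝ × ℝ, ((2 * κ)⁻¹ * Real.exp (-κ * |p.1 - p.2|)) ^ 2 * q p.1 * q p.2) = X at sw ⊢
    generalize (∫ ξ : ℝ, ‖ft (fun x => (q x : ℂ)) ξ‖ ^ 2 / (ξ ^ 2 + 4 * κ ^ 2)) = Y at sw ⊢
    rw [eq_inv_mul_iff_mul_eq₀ hκ.ne']
    have h2 : (2 * Real.pi) ≠ 0 := by positivity
    apply mul_left_cancel₀ h2
    rw [← sw]
    ring
end

section
/- Let c₁, c₂ ∈ ℝ and W(x) = c₁ tanh(x) + c₂. Suppose u : ℝ × ℝ → ℝ is smooth, satisfies the KdV equation ∂_t u = −∂ₓ³u + 6 u ∂ₓu everywhere, and for every pair of nonnegative integers (j,k) and every n ∈ ℕ the quantity sup_{x∈ℝ} (1+|x|)ⁿ |∂_tʲ∂ₓᵏ(u(t,x) − W(x))| is finite and locally bounded in t (i.e., u(t,·) − W is Schwartz in x, locally uniformly in t together with all derivatives). Then for every t the function x ↦ u(t,x)² − u(0,x)² is integrable, the map t ↦ ∫_ℝ ½(u(t,x)² − u(0,x)²) dx is differentiable, and its derivative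 equals the constant 2[(c₁+c₂)³ − (c₂−c₁)³] = 4c₁³ + 12c₁c₂². -/
open MeasureTheory


open Filter Topology

lemma aux_tanh_top : Tendsto Real.tanh atTop (𝓝 1) := by
  have h : Real.tanh = fun x => 1 - 2 / (Real.exp (2 * x) + 1) := by
    funext x
    have h1 := Real.exp_pos x
    have h2 : Real.exp (2 * x) = Real.exp x * Real.exp x := by rw [← Real.exp_add]; ring_nf
    rw [Real.tanh_eq, h2, Real.exp_neg]
    field_simp
    ring
  rw [h]
  have h3 : Tendsto (fun x : ℝ => Real.exp (2 * x) + 1) atTop atTop :=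
    tendsto_atTop_add_const_right _ _
      (Real.tendsto_exp_atTop.comp (tendsto_id.const_mul_atTop (by norm_num)))
  have := (tendsto_const_nhds (x := (1:ℝ)) (f := atTop)).sub (h3.const_div_atTop 2)
  simpa using this

lemma aux_tanh_bot : Tendsto Real.tanh atBot (𝓝 (-1)) := by
  have := (aux_tanh_top.comp tendsto_neg_atBot_atTop).neg
  refine this.congr fun x => ?_
  simp [Real.tanh_neg]

lemma aux_tanh_deriv (x : ℝ) : HasDerivAt Real.tanh (1 - Real.tanh x ^ 2) x := by
  have h : Real.tanh = fun x => Real.sinh x / Real.cosh x := by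
    funext x; exact Real.tanh_eq_sinh_div_cosh x
  rw [h]
  have hc := (Real.cosh_pos x).ne'
  refine ((Real.hasDerivAt_sinh x).div (Real.hasDerivAt_cosh x) hc).congr_deriv ?_
  field_simp

lemma aux_decay {f : ℝ → ℝ} {C : ℝ} (h : ∀ x, |f x| ≤ C * (1 + x ^ 2)⁻¹) :
    Tendsto f atTop (𝓝 0) ∧ Tendsto f atBot (𝓝 0) := by
  have key : ∀ l : Filter ℝ, Tendsto (fun x : ℝ => x ^ 2) l atTop → Tendsto f l (𝓝 0) := by
    intro l hl
    refine squeeze_zero_norm h ?_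
    have := (tendsto_inv_atTop_zero.comp (tendsto_atTop_add_const_left l (1:ℝ) hl)).const_mul C
    simpa using this
  refine ⟨key _ (tendsto_pow_atTop (by norm_num)), key _ ?_⟩
  have := (tendsto_pow_atTop (α := ℝ) (n := 2) (by norm_num)).comp tendsto_neg_atBot_atTop
  refine this.congr fun x => ?_
  simp

/-- Evaluation of the flux at spatial infinity. -/
lemma aux_flux (a b : ℝ) (l : Filter ℝ) (c₁ c₂ : ℝ) (hab : b = c₁ * a + c₂) (ha : a ^ 2 = 1)
    (hW : Tendsto Real.tanh l (𝓝 a)) (g g1 g2 : ℝ → ℝ)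
    (h0 : Tendsto (fun x => g x - (c₁ * Real.tanh x + c₂)) l (𝓝 0))
    (h1 : Tendsto (fun x => g1 x - c₁ * (1 - Real.tanh x ^ 2)) l (𝓝 0))
    (h2 : Tendsto (fun x => g2 x - c₁ * (-(2 * Real.tanh x * (1 - Real.tanh x ^ 2)))) l (𝓝 0)) :
    Tendsto (fun x => -(g x * g2 x) + (1 / 2) * g1 x ^ 2 + 2 * g x ^ 3) l (𝓝 (2 * b ^ 3)) := by
  have e0 : Tendsto g l (𝓝 b) := by
    have := h0.add ((hW.const_mul c₁).add_const c₂)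
    rw [hab]
    simpa using this
  have e1 : Tendsto g1 l (𝓝 0) := by
    have := h1.add (((hW.pow 2).const_sub 1).const_mul c₁)
    simpa [ha] using this
  have e2 : Tendsto g2 l (𝓝 0) := by
    have := h2.add (((hW.const_mul 2).mul ((hW.pow 2).const_sub 1)).neg.const_mul c₁)
    simpa [ha] using this
  have := ((e0.mul e2).neg.add ((e1.pow 2).const_mul (1 / 2))).add ((e0.pow 3).const_mul 2)
  simpa using this

/-- For a smooth solution `u` of KdV which is a Schwartz perturbation
(locally uniformly in time, together with all derivatives) of the step
`W(x) = c₁ tanh x + c₂`, the momentum difference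
`t ↦ ∫ ½(u(t,x)² − u(0,x)²) dx` is differentiable with constant derivative
`2[(c₁+c₂)³ − (c₂−c₁)³] = 4c₁³ + 12c₁c₂²`. -/
theorem stmt1 (c₁ c₂ : ℝ) (u : ℝ → ℝ → ℝ)
    (hsmooth : ContDiff ℝ (⊤ : ℕ∞) (fun p : ℝ × ℝ => u p.1 p.2))
    (hkdv : ∀ t x : ℝ, deriv (fun s => u s x) t =
      -(iteratedDeriv 3 (u t) x) + 6 * u t x * deriv (u t) x)
    (hdecay : ∀ j k n : ℕ, ∀ T > (0 : ℝ), ∃ C : ℝ, ∀ t : ℝ, |t| ≤ T → ∀ x : ℝ,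
      (1 + |x|) ^ n *
        |iteratedDeriv j
          (fun s => iteratedDeriv k (fun y => u s y - (c₁ * Real.tanh y + c₂)) x) t| ≤ C) :
    (∀ t : ℝ, Integrable (fun x => u t x ^ 2 - u 0 x ^ 2)) ∧
    (∀ t : ℝ, HasDerivAt (fun s => ∫ x : ℝ, (1 / 2) * (u s x ^ 2 - u 0 x ^ 2))
      (4 * c₁ ^ 3 + 12 * c₁ * c₂ ^ 2) t) := by
  have hbd : ∀ j k : ℕ, ∀ T > (0 : ℝ), ∃ C : ℝ, 0 ≤ C ∧ ∀ t : ℝ, |t| ≤ T → ∀ x : ℝ,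
      |iteratedDeriv j
          (fun s => iteratedDeriv k (fun y => u s y - (c₁ * Real.tanh y + c₂)) x) t|
        ≤ C * (1 + x ^ 2)⁻¹ := by
    intro j k T hT
    obtain ⟨C, hC⟩ := hdecay j k 2 T hT
    refine ⟨C, le_trans (by positivity) (hC 0 (by simpa using hT.le) 0), fun t ht x => ?_⟩
    have h := hC t ht x
    rw [← div_eq_mul_inv, le_div_iff₀ (by positivity)]
    refine le_trans ?_ h
    rw [mul_comm]
    refine mul_le_mul_of_nonneg_right ?_ (abs_nonneg _)
    nlinarith [abs_nonneg x, sq_abs x]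
  have hux : ∀ t, ContDiff ℝ (⊤ : ℕ∞) (u t) := fun t =>
    hsmooth.comp (contDiff_const.prodMk contDiff_id)
  have hut : ∀ x, ContDiff ℝ (⊤ : ℕ∞) (fun s => u s x) := fun x =>
    hsmooth.comp (contDiff_id.prodMk contDiff_const)
  have hutd : ∀ t x, HasDerivAt (fun s => u s x) (deriv (fun s => u s x) t) t := fun t x =>
    ((hut x).differentiable (by simp) t).hasDerivAt
  -- first-order bounds
  have hv0 : ∀ T > (0 : ℝ), ∃ C : ℝ, 0 ≤ C ∧ ∀ t : ℝ, |t| ≤ T → ∀ x : ℝ,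
      |u t x - (c₁ * Real.tanh x + c₂)| ≤ C * (1 + x ^ 2)⁻¹ := by
    intro T hT
    simpa using hbd 0 0 T hT
  have hinv : ∀ x : ℝ, (1 + x ^ 2)⁻¹ ≤ 1 := fun x => inv_le_one_of_one_le₀ (by nlinarith [sq_nonneg x])
  have hub : ∀ T > (0 : ℝ), ∃ M : ℝ, 0 ≤ M ∧ ∀ t : ℝ, |t| ≤ T → ∀ x : ℝ, |u t x| ≤ M := by
    intro T hT
    obtain ⟨C, hC0, hC⟩ := hv0 T hT
    refine ⟨C + (|c₁| + |c₂|), by positivity, fun t ht x => ?_⟩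
    have h1 : |u t x - (c₁ * Real.tanh x + c₂)| ≤ C :=
      (hC t ht x).trans (mul_le_of_le_one_right hC0 (hinv x))
    have h2 : |c₁ * Real.tanh x + c₂| ≤ |c₁| + |c₂| := by
      refine (abs_add_le _ _).trans (add_le_add ?_ le_rfl)
      rw [abs_mul]
      exact mul_le_of_le_one_right (abs_nonneg _) (Real.abs_tanh_lt_one x).le
    calc |u t x| = |(u t x - (c₁ * Real.tanh x + c₂)) + (c₁ * Real.tanh x + c₂)| := by ring_nf
      _ ≤ _ := abs_add_le _ _
      _ ≤ _ := add_le_add h1 h2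
  have hutb : ∀ T > (0 : ℝ), ∃ C : ℝ, 0 ≤ C ∧ ∀ t : ℝ, |t| ≤ T → ∀ x : ℝ,
      |deriv (fun s => u s x) t| ≤ C * (1 + x ^ 2)⁻¹ := by
    intro T hT
    simpa [iteratedDeriv_one] using hbd 1 0 T hT
  have hInt : ∀ t : ℝ, Integrable (fun x => u t x ^ 2 - u 0 x ^ 2) := by
    intro t
    have hT : (0:ℝ) < |t| + 1 := by positivity
    obtain ⟨C, hC0, hC⟩ := hv0 _ hT
    obtain ⟨M, hM0, hM⟩ := hub _ hT
    have ht : |t| ≤ |t| + 1 := by linarith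
    have h0 : |(0:ℝ)| ≤ |t| + 1 := by simpa using hT.le
    refine (integrable_inv_one_add_sq.const_mul (2 * C * (2 * M))).mono' ?_ (Eventually.of_forall fun x => ?_)
    · exact (((hux t).continuous.pow 2).sub ((hux 0).continuous.pow 2)).aestronglyMeasurable
    · have e : u t x ^ 2 - u 0 x ^ 2 = ((u t x - (c₁ * Real.tanh x + c₂)) -
        (u 0 x - (c₁ * Real.tanh x + c₂))) * (u t x + u 0 x) := by ring
      rw [Real.norm_eq_abs, e, abs_mul]
      have a1 := (abs_sub (u t x - (c₁ * Real.tanh x + c₂)) (u 0 x - (c₁ * Real.tanh x + c₂))).trans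
        (add_le_add (hC t ht x) (hC 0 h0 x))
      have a2 := (abs_add_le (u t x) (u 0 x)).trans (add_le_add (hM t ht x) (hM 0 h0 x))
      have hp : 0 ≤ (1 + x ^ 2)⁻¹ := by positivity
      calc _ ≤ _ := mul_le_mul a1 a2 (abs_nonneg _) (by positivity)
        _ = _ := by ring
  refine ⟨hInt, fun t => ?_⟩
  have hT : (0:ℝ) < |t| + 1 := by positivity
  have ht : |t| ≤ |t| + 1 := by linarith
  obtain ⟨M, hM0, hM⟩ := hub _ hT
  obtain ⟨D, hD0, hD⟩ := hutb _ hT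
  have hd0 : ∀ x, HasDerivAt (u t) (deriv (u t) x) x := fun x =>
    ((hux t).differentiable (by simp) x).hasDerivAt
  have hc1 : ContDiff ℝ (⊤ : ℕ∞) (deriv (u t)) := (contDiff_infty_iff_deriv.1 (hux t)).2
  have hc2 : ContDiff ℝ (⊤ : ℕ∞) (deriv (deriv (u t))) := (contDiff_infty_iff_deriv.1 hc1).2
  have hc3 : ContDiff ℝ (⊤ : ℕ∞) (deriv (deriv (deriv (u t)))) := (contDiff_infty_iff_deriv.1 hc2).2
  have hd1 : ∀ x, HasDerivAt (deriv (u t)) (deriv (deriv (u t)) x) x := fun x =>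
    (hc1.differentiable (by simp) x).hasDerivAt
  have hd2 : ∀ x, HasDerivAt (deriv (deriv (u t))) (deriv (deriv (deriv (u t))) x) x := fun x =>
    (hc2.differentiable (by simp) x).hasDerivAt
  have hk : ∀ x, deriv (fun s => u s x) t =
      -(deriv (deriv (deriv (u t))) x) + 6 * u t x * deriv (u t) x := by
    intro x
    rw [hkdv t x]
    simp [iteratedDeriv_succ, iteratedDeriv_zero]
  have hmain := hasDerivAt_integral_of_dominated_loc_of_deriv_le (μ := volume) (x₀ := t)
    (s := Metric.ball t 1)
    (F := fun s x => (1 / 2) * (u s x ^ 2 - u 0 x ^ 2))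
    (F' := fun s x => u s x * deriv (fun s => u s x) s)
    (bound := fun x => M * D * (1 + x ^ 2)⁻¹)
    (Metric.ball_mem_nhds t one_pos)
    (Eventually.of_forall fun s => ((hInt s).const_mul _).aestronglyMeasurable)
    ((hInt t).const_mul _)
    (by
      simp only [hk]
      have a0 := (hux t).continuous
      have a1 := hc1.continuous
      have a3 := hc3.continuous
      exact Continuous.aestronglyMeasurable (by fun_prop))
    (Eventually.of_forall fun x s hs => by
      have hs' : |s| ≤ |t| + 1 := by
        have h1 : |s - t| < 1 := by simpa [Real.dist_eq] using hs
        have h2 := abs_sub_abs_le_abs_sub s t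
        linarith
      rw [norm_mul, mul_assoc]
      exact mul_le_mul (hM s hs' x) (hD s hs' x) (abs_nonneg _) hM0)
    (integrable_inv_one_add_sq.const_mul _)
    (Eventually.of_forall fun x s hs => by
      have := (((hutd s x).pow 2).sub_const (u 0 x ^ 2)).const_mul (1 / 2 : ℝ)
      refine this.congr_deriv ?_
      simp
      ring)
  obtain ⟨hI, hder⟩ := hmain
  have hv1 : deriv (fun y => u t y - (c₁ * Real.tanh y + c₂)) =
      fun x => deriv (u t) x - c₁ * (1 - Real.tanh x ^ 2) := by
    funext x
    exact ((hd0 x).sub (((aux_tanh_deriv x).const_mul c₁).add_const c₂)).deriv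
  have hv2 : deriv (fun x => deriv (u t) x - c₁ * (1 - Real.tanh x ^ 2)) =
      fun x => deriv (deriv (u t)) x - c₁ * (-(2 * Real.tanh x * (1 - Real.tanh x ^ 2))) := by
    funext x
    refine HasDerivAt.deriv ?_
    refine ((hd1 x).sub ((((aux_tanh_deriv x).pow 2).const_sub 1).const_mul c₁)).congr_deriv ?_
    simp
  obtain ⟨C0, -, hC0⟩ := hv0 _ hT
  obtain ⟨C1, -, hC1⟩ := hbd 0 1 _ hT
  obtain ⟨C2, -, hC2⟩ := hbd 0 2 _ hT
  have l0 := aux_decay (hC0 t ht)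
  have l1 := aux_decay (hC1 t ht)
  have l2 := aux_decay (hC2 t ht)
  simp only [iteratedDeriv_zero, iteratedDeriv_one, hv1] at l1
  simp only [iteratedDeriv_zero, iteratedDeriv_succ, hv1, hv2] at l2
  have htop := aux_flux 1 _ atTop c₁ c₂ rfl (by norm_num) aux_tanh_top _ _ _ l0.1 l1.1 l2.1
  have hbot := aux_flux (-1) _ atBot c₁ c₂ rfl (by norm_num) aux_tanh_bot _ _ _ l0.2 l1.2 l2.2
  have hval := integral_of_hasDerivAt_of_tendsto (f' := fun x => u t x * deriv (fun s => u s x) t)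
    (fun x => by
      have := (((hd0 x).mul (hd2 x)).neg.add (((hd1 x).pow 2).const_mul (1 / 2))).add
        (((hd0 x).pow 3).const_mul 2)
      refine this.congr_deriv ?_
      rw [hk]
      simp
      ring) hI hbot htop
  rw [hval] at hder
  refine hder.congr_deriv ?_
  ring
end

section
/- For every κ > 0 and all real numbers a, b, one has ∫_ℝ dη / ((η²+κ²)((η−a)²+κ²)((η−b)²+κ²)) = π (a² + b² + (a−b)² + 24κ²) / (κ (a²+4κ²)(b²+4κ²)((a−b)²+4κ²)). -/
open MeasureTheory

lemma aux_bound (κ a b η : ℝ) (hκ : 0 < κ) :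
    ‖((η ^ 2 + κ ^ 2) * ((η - a) ^ 2 + κ ^ 2) * ((η - b) ^ 2 + κ ^ 2))⁻¹‖ ≤
      (κ ^ 6)⁻¹ * (1 + (η / κ) ^ 2)⁻¹ := by
  have e : (κ ^ 6)⁻¹ * (1 + (η / κ) ^ 2)⁻¹ = ((η ^ 2 + κ ^ 2) * κ ^ 2 * κ ^ 2)⁻¹ := by
    rw [← mul_inv]
    congr 1
    field_simp
    ring
  rw [e, Real.norm_of_nonneg (by positivity)]
  have h1 : κ ^ 2 ≤ (η - a) ^ 2 + κ ^ 2 := by nlinarith [sq_nonneg (η - a)]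
  have h2 : κ ^ 2 ≤ (η - b) ^ 2 + κ ^ 2 := by nlinarith [sq_nonneg (η - b)]
  gcongr

lemma aux_int (κ : ℝ) (hκ : 0 < κ) :
    Integrable (fun η : ℝ => (κ ^ 6)⁻¹ * (1 + (η / κ) ^ 2)⁻¹) :=
  (integrable_inv_one_add_sq.comp_div hκ.ne').const_mul _

lemma aux_cont_fun (κ a b : ℝ) (hκ : 0 < κ) : Continuous
    (fun η : ℝ => ((η ^ 2 + κ ^ 2) * ((η - a) ^ 2 + κ ^ 2) * ((η - b) ^ 2 + κ ^ 2))⁻¹) := by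
  apply Continuous.inv₀ (by fun_prop)
  intro x
  positivity

lemma aux_integrable (κ a b : ℝ) (hκ : 0 < κ) : Integrable
    (fun η : ℝ => ((η ^ 2 + κ ^ 2) * ((η - a) ^ 2 + κ ^ 2) * ((η - b) ^ 2 + κ ^ 2))⁻¹) :=
  (aux_int κ hκ).mono' (aux_cont_fun κ a b hκ).aestronglyMeasurable
    (Filter.Eventually.of_forall fun η => aux_bound κ a b η hκ)

lemma aux_cont (κ : ℝ) (hκ : 0 < κ) : Continuous (fun p : ℝ × ℝ =>
    ∫ η : ℝ, ((η ^ 2 + κ ^ 2) * ((η - p.1) ^ 2 + κ ^ 2) * ((η - p.2) ^ 2 + κ ^ 2))⁻¹) := by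
  apply continuous_of_dominated (bound := fun η : ℝ => (κ ^ 6)⁻¹ * (1 + (η / κ) ^ 2)⁻¹)
  · intro p
    exact (aux_cont_fun κ p.1 p.2 hκ).aestronglyMeasurable
  · intro p
    exact Filter.Eventually.of_forall fun η => aux_bound κ p.1 p.2 η hκ
  · exact aux_int κ hκ
  · refine Filter.Eventually.of_forall fun η => ?_
    apply Continuous.inv₀ (by fun_prop)
    intro x
    positivity

lemma aux_log (κ a : ℝ) (hκ : 0 < κ) (l : Filter ℝ)
    (hl : Filter.Tendsto (fun x : ℝ => x⁻¹) l (nhds 0)) (hl0 : ∀ᶠ x in l, x ≠ 0) :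
    Filter.Tendsto (fun η : ℝ => Real.log ((η - a) ^ 2 + κ ^ 2) - Real.log (η ^ 2 + κ ^ 2))
      l (nhds 0) := by
  have h : ContinuousAt (fun t : ℝ => Real.log ((1 - a * t) ^ 2 + κ ^ 2 * t ^ 2)
      - Real.log (1 + κ ^ 2 * t ^ 2)) 0 := by
    apply ContinuousAt.sub
    · apply ContinuousAt.log (by fun_prop)
      norm_num
    · apply ContinuousAt.log (by fun_prop)
      norm_num
  have h2 := h.tendsto.comp hl
  simp only [mul_zero, sub_zero, one_pow, ne_eq, OfNat.ofNat_ne_zero, not_false_eq_true,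
    zero_pow, add_zero, Real.log_one] at h2
  refine h2.congr' ?_
  filter_upwards [hl0] with x hx
  have e1 : (x - a) ^ 2 + κ ^ 2 = x ^ 2 * ((1 - a * x⁻¹) ^ 2 + κ ^ 2 * x⁻¹ ^ 2) := by
    field_simp
  have e2 : x ^ 2 + κ ^ 2 = x ^ 2 * (1 + κ ^ 2 * x⁻¹ ^ 2) := by
    field_simp
  have p1 : (x - a) ^ 2 + κ ^ 2 ≠ 0 := by positivity
  rw [e1] at p1
  simp only [Function.comp]
  rw [e1, e2, Real.log_mul (by positivity) (right_ne_zero_of_mul p1),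
    Real.log_mul (by positivity) (by positivity)]
  ring

lemma aux_pf (κ a b η : ℝ) (hκ : 0 < κ) (ha : a ≠ 0) (hb : b ≠ 0) (hab : a - b ≠ 0) :
    ((η ^ 2 + κ ^ 2) * ((η - a) ^ 2 + κ ^ 2) * ((η - b) ^ 2 + κ ^ 2))⁻¹ =
    (2 * (a + b) * η + (a * b - 4 * κ ^ 2)) / (a * b * (a ^ 2 + 4 * κ ^ 2) * (b ^ 2 + 4 * κ ^ 2))
      / (η ^ 2 + κ ^ 2)
    + (-2 * (2 * a - b) * (η - a) + (a * (a - b) - 4 * κ ^ 2)) /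
      (a * (a - b) * (a ^ 2 + 4 * κ ^ 2) * ((a - b) ^ 2 + 4 * κ ^ 2)) / ((η - a) ^ 2 + κ ^ 2)
    + (2 * (2 * b - a) * (η - b) + (b * (a - b) + 4 * κ ^ 2)) /
      (b * (a - b) * (b ^ 2 + 4 * κ ^ 2) * ((a - b) ^ 2 + 4 * κ ^ 2)) / ((η - b) ^ 2 + κ ^ 2) := by
  have h1 : η ^ 2 + κ ^ 2 ≠ 0 := by positivity
  have h2 : (η - a) ^ 2 + κ ^ 2 ≠ 0 := by positivity
  have h3 : (η - b) ^ 2 + κ ^ 2 ≠ 0 := by positivity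
  have h4 : a ^ 2 + 4 * κ ^ 2 ≠ 0 := by positivity
  have h5 : b ^ 2 + 4 * κ ^ 2 ≠ 0 := by positivity
  have h6 : (a - b) ^ 2 + 4 * κ ^ 2 ≠ 0 := by positivity
  field_simp
  ring

lemma aux_dlog (κ c η : ℝ) (hκ : 0 < κ) : HasDerivAt
    (fun η : ℝ => Real.log ((η - c) ^ 2 + κ ^ 2)) (2 * (η - c) / ((η - c) ^ 2 + κ ^ 2)) η := by
  have h := ((((hasDerivAt_id η).sub_const c).pow 2).add_const (κ ^ 2)).log
    (by simp only [id, Pi.pow_apply]; positivity)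
  simpa using h

lemma aux_datan (κ c η : ℝ) (hκ : 0 < κ) : HasDerivAt
    (fun η : ℝ => Real.arctan ((η - c) / κ)) (κ / ((η - c) ^ 2 + κ ^ 2)) η := by
  have h := (((hasDerivAt_id η).sub_const c).div_const κ).arctan
  refine HasDerivAt.congr_deriv (f := fun η : ℝ => Real.arctan ((η - c) / κ)) h ?_
  change 1 / (1 + ((η - c) / κ) ^ 2) * (1 / κ) = _
  field_simp
  ring

lemma aux_gen (κ a b : ℝ) (hκ : 0 < κ) (ha : a ≠ 0) (hb : b ≠ 0) (hab : a - b ≠ 0) :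
    ∫ η : ℝ, ((η ^ 2 + κ ^ 2) * ((η - a) ^ 2 + κ ^ 2) * ((η - b) ^ 2 + κ ^ 2))⁻¹ =
      Real.pi * (a ^ 2 + b ^ 2 + (a - b) ^ 2 + 24 * κ ^ 2) /
        (κ * (a ^ 2 + 4 * κ ^ 2) * (b ^ 2 + 4 * κ ^ 2) * ((a - b) ^ 2 + 4 * κ ^ 2)) := by
  have h4 : a ^ 2 + 4 * κ ^ 2 ≠ 0 := by positivity
  have h5 : b ^ 2 + 4 * κ ^ 2 ≠ 0 := by positivity
  have h6 : (a - b) ^ 2 + 4 * κ ^ 2 ≠ 0 := by positivity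
  obtain ⟨D0, hD0⟩ : ∃ D, D = a * b * (a ^ 2 + 4 * κ ^ 2) * (b ^ 2 + 4 * κ ^ 2) := ⟨_, rfl⟩
  obtain ⟨Da, hDa⟩ : ∃ D, D = a * (a - b) * (a ^ 2 + 4 * κ ^ 2) * ((a - b) ^ 2 + 4 * κ ^ 2) :=
    ⟨_, rfl⟩
  obtain ⟨Db, hDb⟩ : ∃ D, D = b * (a - b) * (b ^ 2 + 4 * κ ^ 2) * ((a - b) ^ 2 + 4 * κ ^ 2) :=
    ⟨_, rfl⟩
  have n0 : D0 ≠ 0 := by rw [hD0]; positivity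
  have na : Da ≠ 0 := by rw [hDa]; positivity
  have nb : Db ≠ 0 := by rw [hDb]; positivity
  have hA : (a + b) / D0 = (2 * a - b) / Da - (2 * b - a) / Db := by
    rw [hD0, hDa, hDb]
    field_simp
    ring
  have hB : Real.pi * (a ^ 2 + b ^ 2 + (a - b) ^ 2 + 24 * κ ^ 2) /
        (κ * (a ^ 2 + 4 * κ ^ 2) * (b ^ 2 + 4 * κ ^ 2) * ((a - b) ^ 2 + 4 * κ ^ 2)) =
      Real.pi / κ * ((a * b - 4 * κ ^ 2) / D0 + (a * (a - b) - 4 * κ ^ 2) / Da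
        + (b * (a - b) + 4 * κ ^ 2) / Db) := by
    rw [hD0, hDa, hDb]
    field_simp
    ring
  have hpf := fun η => aux_pf κ a b η hκ ha hb hab
  simp only [← hD0, ← hDa, ← hDb] at hpf
  let F : ℝ → ℝ := fun η =>
    -((2 * a - b) / Da) * (Real.log ((η - a) ^ 2 + κ ^ 2) - Real.log (η ^ 2 + κ ^ 2))
    + (2 * b - a) / Db * (Real.log ((η - b) ^ 2 + κ ^ 2) - Real.log (η ^ 2 + κ ^ 2))
    + (a * b - 4 * κ ^ 2) / D0 / κ * Real.arctan ((η - 0) / κ)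
    + (a * (a - b) - 4 * κ ^ 2) / Da / κ * Real.arctan ((η - a) / κ)
    + (b * (a - b) + 4 * κ ^ 2) / Db / κ * Real.arctan ((η - b) / κ)
  have hF : ∀ η, HasDerivAt F
      (((η ^ 2 + κ ^ 2) * ((η - a) ^ 2 + κ ^ 2) * ((η - b) ^ 2 + κ ^ 2))⁻¹) η := by
    intro η
    have l0 := aux_dlog κ 0 η hκ
    simp only [sub_zero] at l0
    have h := ((((((aux_dlog κ a η hκ).sub l0).const_mul (-((2 * a - b) / Da))).add
      (((aux_dlog κ b η hκ).sub l0).const_mul ((2 * b - a) / Db))).add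
      ((aux_datan κ 0 η hκ).const_mul ((a * b - 4 * κ ^ 2) / D0 / κ))).add
      ((aux_datan κ a η hκ).const_mul ((a * (a - b) - 4 * κ ^ 2) / Da / κ))).add
      ((aux_datan κ b η hκ).const_mul ((b * (a - b) + 4 * κ ^ 2) / Db / κ))
    refine h.congr_deriv ?_
    rw [hpf]
    have e : (2 * (a + b) * η + (a * b - 4 * κ ^ 2)) / D0 =
      2 * ((2 * a - b) / Da - (2 * b - a) / Db) * η + (a * b - 4 * κ ^ 2) / D0 := by
      rw [← hA]; ring
    rw [e, sub_zero]
    have h1 : η ^ 2 + κ ^ 2 ≠ 0 := by positivity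
    have h2 : (η - a) ^ 2 + κ ^ 2 ≠ 0 := by positivity
    have h3 : (η - b) ^ 2 + κ ^ 2 ≠ 0 := by positivity
    generalize η ^ 2 + κ ^ 2 = P at *
    generalize (η - a) ^ 2 + κ ^ 2 = Q at *
    generalize (η - b) ^ 2 + κ ^ 2 = R at *
    clear hpf hD0 hDa hDb hA hB e h l0
    field_simp
    ring
  have tt : ∀ c, Filter.Tendsto (fun η : ℝ => Real.arctan ((η - c) / κ)) Filter.atTop
      (nhds (Real.pi / 2)) := fun c =>
    (Real.tendsto_arctan_atTop.mono_right nhdsWithin_le_nhds).comp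
      ((Filter.tendsto_atTop_add_const_right _ (-c) Filter.tendsto_id).atTop_div_const hκ)
  have tb : ∀ c, Filter.Tendsto (fun η : ℝ => Real.arctan ((η - c) / κ)) Filter.atBot
      (nhds (-(Real.pi / 2))) := fun c =>
    (Real.tendsto_arctan_atBot.mono_right nhdsWithin_le_nhds).comp
      ((Filter.tendsto_atBot_add_const_right _ (-c) Filter.tendsto_id).atBot_div_const hκ)
  have lt := fun c => aux_log κ c hκ Filter.atTop tendsto_inv_atTop_zero
    (Filter.eventually_ne_atTop 0)
  have lb := fun c => aux_log κ c hκ Filter.atBot tendsto_inv_atBot_zero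
    (Filter.eventually_ne_atBot 0)
  have T := fun (l : Filter ℝ) (v : ℝ)
    (t : ∀ c, Filter.Tendsto (fun η : ℝ => Real.arctan ((η - c) / κ)) l (nhds v))
    (g : ∀ c, Filter.Tendsto (fun η : ℝ => Real.log ((η - c) ^ 2 + κ ^ 2)
      - Real.log (η ^ 2 + κ ^ 2)) l (nhds 0)) =>
    ((((((g a).const_mul (-((2 * a - b) / Da))).add
      ((g b).const_mul ((2 * b - a) / Db))).add
      ((t 0).const_mul ((a * b - 4 * κ ^ 2) / D0 / κ))).add
      ((t a).const_mul ((a * (a - b) - 4 * κ ^ 2) / Da / κ))).add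
      ((t b).const_mul ((b * (a - b) + 4 * κ ^ 2) / Db / κ)))
  rw [integral_of_hasDerivAt_of_tendsto hF (aux_integrable κ a b hκ)
    (T _ _ tb lb) (T _ _ tt lt), hB]
  ring

/-- The residue-calculus evaluation of the integral of the product of
three resolvent symbols. -/
theorem stmt5 (κ a b : ℝ) (hκ : 0 < κ) :
    ∫ η : ℝ, ((η ^ 2 + κ ^ 2) * ((η - a) ^ 2 + κ ^ 2) * ((η - b) ^ 2 + κ ^ 2))⁻¹ =
      Real.pi * (a ^ 2 + b ^ 2 + (a - b) ^ 2 + 24 * κ ^ 2) /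
        (κ * (a ^ 2 + 4 * κ ^ 2) * (b ^ 2 + 4 * κ ^ 2) * ((a - b) ^ 2 + 4 * κ ^ 2)) := by
  have cI := aux_cont κ hκ
  have cR : Continuous (fun p : ℝ × ℝ =>
      Real.pi * (p.1 ^ 2 + p.2 ^ 2 + (p.1 - p.2) ^ 2 + 24 * κ ^ 2) /
        (κ * (p.1 ^ 2 + 4 * κ ^ 2) * (p.2 ^ 2 + 4 * κ ^ 2) * ((p.1 - p.2) ^ 2 + 4 * κ ^ 2))) := by
    apply Continuous.div (by fun_prop) (by fun_prop)
    intro p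
    positivity
  have step : ∀ b : ℝ, b ≠ 0 → ∀ a : ℝ, 
      ∫ η : ℝ, ((η ^ 2 + κ ^ 2) * ((η - a) ^ 2 + κ ^ 2) * ((η - b) ^ 2 + κ ^ 2))⁻¹ =
      Real.pi * (a ^ 2 + b ^ 2 + (a - b) ^ 2 + 24 * κ ^ 2) /
        (κ * (a ^ 2 + 4 * κ ^ 2) * (b ^ 2 + 4 * κ ^ 2) * ((a - b) ^ 2 + 4 * κ ^ 2)) := by
    intro b hb a
    have hd : Dense (({0, b} : Set ℝ)ᶜ) := (Set.toFinite _).countable.dense_compl ℝ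
    refine congrFun (Continuous.ext_on hd (cI.comp (Continuous.prodMk_left b))
      (cR.comp (Continuous.prodMk_left b)) ?_) a
    intro x hx
    simp only [Set.mem_compl_iff, Set.mem_insert_iff, Set.mem_singleton_iff, not_or] at hx
    exact aux_gen κ x b hκ hx.1 hb (sub_ne_zero.2 hx.2)
  have hd : Dense (({0} : Set ℝ)ᶜ) := (Set.toFinite _).countable.dense_compl ℝ
  refine congrFun (Continuous.ext_on hd (cI.comp (Continuous.prodMk_right a))
      (cR.comp (Continuous.prodMk_right a)) ?_) b
  intro x hx
  exact step x hx a
end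

section
/- For every κ > 0, the supremum over (η₁, η₂) ∈ ℝ² of the function w(η₁, η₂) = κ⁴ (24κ² + η₁² + η₂² + (η₁+η₂)²) / (2(2π)^{1/2} (η₁²+4κ²)(η₂²+4κ²)((η₁+η₂)²+4κ²)) equals (3/16)(2π)^{-1/2}, and it is attained at η₁ = η₂ = 0. In particular ‖w‖_{L^∞(ℝ²)} = (3/16)(2π)^{-1/2} independently of κ. -/
/-- The Fourier multiplier weight arising after evaluating the `η₃`-integral in the trace
of the cubic term of the tidal `H_κ` flow. -/
noncomputable def w6 (κ η₁ η₂ : ℝ) : ℝ :=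
  κ ^ 4 * (24 * κ ^ 2 + η₁ ^ 2 + η₂ ^ 2 + (η₁ + η₂) ^ 2) /
    (2 * Real.sqrt (2 * Real.pi) * (η₁ ^ 2 + 4 * κ ^ 2) * (η₂ ^ 2 + 4 * κ ^ 2) *
      ((η₁ + η₂) ^ 2 + 4 * κ ^ 2))

/-- For every `κ > 0`, the supremum of `w6 κ` over `ℝ²` equals
`(3/16)(2π)^{-1/2}` and is attained at the origin. -/
theorem stmt6 (κ : ℝ) (hκ : 0 < κ) :
    IsGreatest (Set.range fun p : ℝ × ℝ => w6 κ p.1 p.2)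
      ((3 / 16) * (Real.sqrt (2 * Real.pi))⁻¹) ∧
    w6 κ 0 0 = (3 / 16) * (Real.sqrt (2 * Real.pi))⁻¹ := by
  have hs : 0 < Real.sqrt (2 * Real.pi) := Real.sqrt_pos.mpr (by positivity)
  have h0 : w6 κ 0 0 = (3 / 16) * (Real.sqrt (2 * Real.pi))⁻¹ := by
    unfold w6
    generalize Real.sqrt (2 * Real.pi) = s at hs
    field_simp
    norm_num
    try ring
  refine ⟨⟨⟨(0, 0), h0⟩, ?_⟩, h0⟩
  rintro _ ⟨⟨x, y⟩, rfl⟩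
  show w6 κ x y ≤ _
  unfold w6
  generalize Real.sqrt (2 * Real.pi) = s at hs
  have hk : 0 < κ ^ 2 := by positivity
  have key : 8 * (κ ^ 4 * (24 * κ ^ 2 + x ^ 2 + y ^ 2 + (x + y) ^ 2)) ≤
      3 * ((x ^ 2 + 4 * κ ^ 2) * (y ^ 2 + 4 * κ ^ 2) * ((x + y) ^ 2 + 4 * κ ^ 2)) := by
    have e : κ ^ 4 = κ ^ 2 * κ ^ 2 := by ring
    rw [e]
    have ha := sq_nonneg x
    have hb := sq_nonneg y
    have hc := sq_nonneg (x + y)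
    generalize x ^ 2 = a at *
    generalize y ^ 2 = b at *
    generalize (x + y) ^ 2 = c at *
    generalize κ ^ 2 = k at *
    have : 0 ≤ 3 * (a * b * c) + 12 * k * (a * b + b * c + a * c) + 40 * k ^ 2 * (a + b + c) := by
      positivity
    linarith
  rw [div_le_iff₀ (by positivity)]
  have e2 : 3 / 16 * s⁻¹ * (2 * s * (x ^ 2 + 4 * κ ^ 2) * (y ^ 2 + 4 * κ ^ 2) *
      ((x + y) ^ 2 + 4 * κ ^ 2)) = 3 / 8 * ((x ^ 2 + 4 * κ ^ 2) * (y ^ 2 + 4 * κ ^ 2) *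
      ((x + y) ^ 2 + 4 * κ ^ 2)) * (s⁻¹ * s) := by ring
  rw [e2, inv_mul_cancel₀ hs.ne']
  linarith
end

section
/- There exists a constant C > 0 such that for every real number h, ∫_ℝ |e^{iξh} − 1|² / (ξ² + 1) dξ ≤ C |h|. (Consequently, the map x ↦ √R₀(κ) δₓ is ½-Hölder continuous from ℝ into L²(ℝ).) -/
open MeasureTheory

/-- `∫ |e^{iξh} − 1|²/(ξ²+1) dξ ≲ |h|`; consequently `x ↦ √R₀(κ) δₓ`
is ½-Hölder continuous into `L²`. -/
theorem stmt7 : ∃ C : ℝ, 0 < C ∧ ∀ h : ℝ,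
    ∫ ξ : ℝ, ‖Complex.exp (Complex.I * (ξ : ℂ) * (h : ℂ)) - 1‖ ^ 2 / (ξ ^ 2 + 1) ≤
      C * |h| := by
  refine ⟨5 * Real.pi, by positivity, fun h => ?_⟩
  by_cases hh : h = 0
  · subst hh; simp
  have hint : Integrable (fun ξ : ℝ => 5 * h ^ 2 * (1 + (h * ξ) ^ 2)⁻¹) :=
    (integrable_inv_one_add_sq.comp_mul_left' hh).const_mul _
  have key : ∀ ξ : ℝ, ‖Complex.exp (Complex.I * (ξ : ℂ) * (h : ℂ)) - 1‖ ^ 2 / (ξ ^ 2 + 1)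
      ≤ 5 * h ^ 2 * (1 + (h * ξ) ^ 2)⁻¹ := by
    intro ξ
    have e : Complex.I * (ξ : ℂ) * (h : ℂ) = Complex.I * ((h * ξ : ℝ) : ℂ) := by
      push_cast; ring
    rw [e]
    have h1 := Real.norm_exp_I_mul_ofReal_sub_one_le (x := h * ξ)
    have h2 : ‖Complex.exp (Complex.I * ((h * ξ : ℝ) : ℂ)) - 1‖ ≤ 2 := by
      refine (norm_sub_le _ _).trans ?_
      rw [Complex.norm_exp_I_mul_ofReal, norm_one]; norm_num
    have h0 := norm_nonneg (Complex.exp (Complex.I * ((h * ξ : ℝ) : ℂ)) - 1)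
    generalize ‖Complex.exp (Complex.I * ((h * ξ : ℝ) : ℂ)) - 1‖ = n at *
    have h3 : n ^ 2 ≤ 4 := by nlinarith
    have h4 : n ^ 2 ≤ (h * ξ) ^ 2 := by
      rw [← sq_abs (h * ξ)]; exact pow_le_pow_left₀ h0 h1 2
    rw [← div_eq_mul_inv, div_le_div_iff₀ (by positivity) (by positivity)]
    have h5 : n ^ 2 * (1 + (h * ξ) ^ 2) ≤ 5 * (h * ξ) ^ 2 := by
      nlinarith [mul_le_mul_of_nonneg_right h3 (sq_nonneg (h * ξ))]
    nlinarith [sq_nonneg h]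
  refine (integral_mono_of_nonneg (Filter.Eventually.of_forall fun ξ => by
    simp only [Pi.zero_apply]; positivity) hint (Filter.Eventually.of_forall key)).trans ?_
  rw [integral_const_mul, Measure.integral_comp_mul_left (fun x : ℝ => (1 + x ^ 2)⁻¹),
    integral_univ_inv_one_add_sq, smul_eq_mul, abs_inv, ← sq_abs h]
  have : |h| ≠ 0 := abs_ne_zero.mpr hh
  apply le_of_eq
  field_simp
end

section
/- Fix an integer s ≥ 3. For each p ∈ [1,∞] and each integer j > 0 there exists a constant C (depending only on φ, s, p, j) such that for every N ∈ 2^ℤ and every Schwartz function q : ℝ → ℂ, ‖Π²_{<N} q^{(s+j)}‖_{L^p(ℝ)} ≤ C N^j ‖P²_{<2N} q^{(s)}‖_{L^p(ℝ)}. -/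
open MeasureTheory
open scoped ENNReal NNReal

/-- The Fourier multiplier operator with symbol `m`. -/
noncomputable def fmul (m : ℝ → ℝ) (f : ℝ → ℂ) (x : ℝ) : ℂ :=
  (Real.sqrt (2 * Real.pi) : ℂ)⁻¹ *
    ∫ ξ : ℝ, Complex.exp (Complex.I * (ξ : ℂ) * (x : ℂ)) * (m ξ : ℂ) * ft f ξ

/-- `ψ(ξ) = √(φ(ξ) − φ(2ξ))`. -/
noncomputable def psi (φ : ℝ → ℝ) (ξ : ℝ) : ℝ := Real.sqrt (φ ξ - φ (2 * ξ))

/-- `m_hi(ξ) = Σ_{K∈2^ℤ, K<1} K^s ψ²(ξ/K) + Σ_{K∈2^ℤ, K≥1} ψ²(ξ/K)`. -/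
noncomputable def mhi (φ : ℝ → ℝ) (s : ℕ) (ξ : ℝ) : ℝ :=
  ∑' n : ℤ, (if n < 0 then ((2 : ℝ) ^ n) ^ s else 1) * (psi φ (ξ / (2 : ℝ) ^ n)) ^ 2

/-- The symbol `Σ_{K∈2^ℤ, K<N} ψ²(ξ/K)` of the low-frequency projection `P²_{<N}`. -/
noncomputable def plo (φ : ℝ → ℝ) (N : ℝ) (ξ : ℝ) : ℝ :=
  ∑' k : ℤ, if (2 : ℝ) ^ k < N then (psi φ (ξ / (2 : ℝ) ^ k)) ^ 2 else 0


open scoped FourierTransform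

lemma conv_bound (ν : Measure ℝ) [IsFiniteMeasure ν] (f h : ℝ → ℂ) (hf : Continuous f) (b : ℝ)
    (hh : ∀ x, ‖h x‖ₑ ≤ ∫⁻ u, ‖f (x - b * u)‖ₑ ∂ν) (p : ℝ≥0∞) (hp : 1 ≤ p) :
    eLpNorm h p volume ≤ ν Set.univ * eLpNorm f p volume := by
  rcases eq_or_ne p ∞ with rfl | hpt
  · have hle : ∀ x, ‖f x‖ₑ ≤ eLpNorm f ∞ volume := by
      have h1 : ∀ᵐ x, ‖f x‖ₑ ≤ eLpNorm f ∞ volume := by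
        rw [eLpNorm_exponent_top]; exact enorm_ae_le_eLpNormEssSup f volume
      have ho : IsOpen {x | eLpNorm f ∞ volume < ‖f x‖ₑ} :=
        isOpen_lt continuous_const hf.enorm
      have h0 : volume {x | eLpNorm f ∞ volume < ‖f x‖ₑ} = 0 := by
        have := ae_iff.1 h1
        simpa using this
      have he := (ho.measure_eq_zero_iff volume).1 h0
      intro x
      by_contra hx
      have : x ∈ {x | eLpNorm f ∞ volume < ‖f x‖ₑ} := not_le.1 hx
      rw [he] at this
      exact this
    rw [eLpNorm_exponent_top (f := h)]
    refine eLpNormEssSup_le_of_ae_enorm_bound (Filter.Eventually.of_forall fun x => ?_)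
    refine (hh x).trans ((lintegral_mono fun u => hle _).trans ?_)
    rw [lintegral_const, mul_comm]
  · have hp0 : p ≠ 0 := (lt_of_lt_of_le one_pos hp).ne'
    set r := p.toReal with hr
    haveI : Fact (1 ≤ p) := ⟨hp⟩
    have hr1 : 1 ≤ r := by
      rw [hr]; exact (ENNReal.dichotomy p).resolve_left hpt
    have hr0 : 0 < r := by linarith
    have key : ∀ x, ‖h x‖ₑ ^ r ≤ (ν Set.univ) ^ (r - 1) * ∫⁻ u, ‖f (x - b * u)‖ₑ ^ r ∂ν := by
      intro x
      have hm : AEStronglyMeasurable (fun u => f (x - b * u)) ν :=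
        (hf.comp (by fun_prop)).aestronglyMeasurable
      have h1 := eLpNorm_le_eLpNorm_mul_rpow_measure_univ hp hm
      rw [eLpNorm_one_eq_lintegral_enorm, eLpNorm_eq_lintegral_rpow_enorm_toReal hp0 hpt] at h1
      have h2 := ENNReal.rpow_le_rpow ((hh x).trans h1) hr0.le
      refine h2.trans (le_of_eq ?_)
      rw [ENNReal.mul_rpow_of_nonneg _ _ hr0.le, ← ENNReal.rpow_mul, ← ENNReal.rpow_mul, ← hr]
      have e1 : 1 / r * r = 1 := by field_simp
      have e2 : (1 / ENNReal.toReal 1 - 1 / r) * r = r - 1 := by simp; field_simp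
      rw [e1, e2, ENNReal.rpow_one, mul_comm]
    have hmeas : Measurable (Function.uncurry fun (x u : ℝ) => ‖f (x - b * u)‖ₑ ^ r) := by
      have : Continuous (fun z : ℝ × ℝ => f (z.1 - b * z.2)) := hf.comp (by fun_prop)
      exact this.enorm.measurable.pow_const r
    rw [eLpNorm_eq_lintegral_rpow_enorm_toReal hp0 hpt, eLpNorm_eq_lintegral_rpow_enorm_toReal hp0 hpt, ← hr]
    have tot : ∫⁻ x, ‖h x‖ₑ ^ r ≤ (ν Set.univ) ^ r * ∫⁻ x, ‖f x‖ₑ ^ r := by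
      calc ∫⁻ x, ‖h x‖ₑ ^ r ≤ ∫⁻ x, (ν Set.univ) ^ (r - 1) * ∫⁻ u, ‖f (x - b * u)‖ₑ ^ r ∂ν :=
            lintegral_mono key
        _ = (ν Set.univ) ^ (r - 1) * ∫⁻ x, ∫⁻ u, ‖f (x - b * u)‖ₑ ^ r ∂ν := by
            rw [lintegral_const_mul' _ _ (ENNReal.rpow_ne_top_of_nonneg (by linarith) (measure_ne_top _ _))]
        _ = (ν Set.univ) ^ (r - 1) * ∫⁻ u, (∫⁻ x, ‖f (x - b * u)‖ₑ ^ r) ∂ν := by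
            rw [lintegral_lintegral_swap hmeas.aemeasurable]
        _ = (ν Set.univ) ^ (r - 1) * ((∫⁻ x, ‖f x‖ₑ ^ r) * ν Set.univ) := by
            congr 1
            rw [← lintegral_const]
            refine lintegral_congr fun u => ?_
            exact lintegral_sub_right_eq_self (fun x => ‖f x‖ₑ ^ r) (b * u)
        _ = _ := by
            have : (ν Set.univ) ^ r = (ν Set.univ) ^ (r - 1) * ν Set.univ := by
              nth_rewrite 3 [← ENNReal.rpow_one (ν Set.univ)]
              rw [← ENNReal.rpow_add_of_nonneg _ _ (by linarith) (by norm_num)]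
              congr 1; ring
            rw [this]; ring
    refine (ENNReal.rpow_le_rpow tot (by positivity)).trans (le_of_eq ?_)
    rw [ENNReal.mul_rpow_of_nonneg _ _ (by positivity), ← ENNReal.rpow_mul]
    have e1 : r * (1 / r) = 1 := by field_simp
    rw [e1, ENNReal.rpow_one]

lemma kernel_integrable (M : ℝ → ℂ) (hM : ContDiff ℝ 2 M) (hc : HasCompactSupport M) :
    Integrable (𝓕 M) volume := by
  have hint : ∀ n : ℕ, (n : ℕ∞) ≤ (2 : ℕ∞) → Integrable (iteratedDeriv n M) := by
    intro n hn
    have hcont : Continuous (iteratedDeriv n M) :=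
      hM.continuous_iteratedDeriv n (by exact_mod_cast hn)
    refine hcont.integrable_of_hasCompactSupport ?_
    refine (hc.iteratedFDeriv (𝕜 := ℝ) n).mono' ?_
    intro x hx
    refine subset_tsupport _ ?_
    simp only [Function.mem_support] at hx ⊢
    intro h0
    apply hx
    simp [iteratedDeriv, h0]
  have hi0 : Integrable M := by simpa using hint 0 (by norm_num)
  have hF := Real.fourier_iteratedDeriv (f := M) (N := (2 : ℕ∞)) (n := 2) (by exact_mod_cast hM) hint le_rfl
  have hcF : Continuous (𝓕 M) :=
    VectorFourier.fourierIntegral_continuous Real.continuous_fourierChar (by fun_prop) hi0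
  have b0 : ∀ x, ‖𝓕 M x‖ ≤ ∫ v, ‖M v‖ := fun x =>
    VectorFourier.norm_fourierIntegral_le_integral_norm _ _ _ M x
  have b2 : ∀ x, ‖𝓕 (iteratedDeriv 2 M) x‖ ≤ ∫ v, ‖iteratedDeriv 2 M v‖ := fun x =>
    VectorFourier.norm_fourierIntegral_le_integral_norm _ _ _ _ x
  refine Integrable.mono' (integrable_inv_one_add_sq.const_mul ((∫ v, ‖M v‖) + ∫ v, ‖iteratedDeriv 2 M v‖))
    hcF.aestronglyMeasurable (Filter.Eventually.of_forall fun x => ?_)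
  have h2 := b2 x
  rw [hF] at h2
  have hn : ‖(2 * (Real.pi : ℂ) * Complex.I * (x : ℂ)) ^ 2 • 𝓕 M x‖ = (2 * Real.pi) ^ 2 * x ^ 2 * ‖𝓕 M x‖ := by
    rw [norm_smul, norm_pow]
    simp [mul_pow, abs_of_pos Real.pi_pos]
  rw [hn] at h2
  have hpi : 1 ≤ (2 * Real.pi) ^ 2 := by nlinarith [Real.pi_gt_three]
  have h3 : x ^ 2 * ‖𝓕 M x‖ ≤ (2 * Real.pi) ^ 2 * x ^ 2 * ‖𝓕 M x‖ := by
    have := mul_nonneg (sq_nonneg x) (norm_nonneg (𝓕 M x))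
    nlinarith
  rw [← div_eq_mul_inv, le_div_iff₀ (by positivity)]
  nlinarith [b0 x]

lemma schwartz_iter (q : SchwartzMap ℝ ℂ) (n : ℕ) :
    ∃ g : SchwartzMap ℝ ℂ, ⇑g = iteratedDeriv n ⇑q := by
  induction n with
  | zero => exact ⟨q, by simp⟩
  | succ n ih =>
    obtain ⟨g, hg⟩ := ih
    refine ⟨SchwartzMap.derivCLM ℝ ℂ g, ?_⟩
    ext x
    rw [iteratedDeriv_succ, ← hg]
    simp

lemma ft_eq (f : ℝ → ℂ) (ξ : ℝ) :
    ft f ξ = (Real.sqrt (2 * Real.pi) : ℂ)⁻¹ * 𝓕 f (ξ / (2 * Real.pi)) := by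
  rw [ft, Real.fourier_real_eq_integral_exp_smul]
  congr 2
  ext x
  rw [smul_eq_mul]
  congr 2
  have : (Real.pi : ℂ) ≠ 0 := by exact_mod_cast Real.pi_ne_zero
  push_cast
  field_simp

lemma ft_iter (q : SchwartzMap ℝ ℂ) (n : ℕ) (ξ : ℝ) :
    ft (iteratedDeriv n ⇑q) ξ = (Complex.I * ξ) ^ n * ft q ξ := by
  rw [ft_eq, ft_eq]
  have h := Real.fourier_iteratedDeriv (f := ⇑q) (N := (⊤ : ℕ∞)) (n := n) (q.smooth ⊤)
    (fun m _ => by obtain ⟨g, hg⟩ := schwartz_iter q m; rw [← hg]; exact g.integrable) le_top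
  rw [h]
  have : (Real.pi : ℂ) ≠ 0 := by exact_mod_cast Real.pi_ne_zero
  have e : 2 * (Real.pi : ℂ) * Complex.I * ((ξ / (2 * Real.pi) : ℝ) : ℂ) = Complex.I * ξ := by
    push_cast; field_simp
  simp only [e, smul_eq_mul]
  ring

lemma ft_cont (f : ℝ → ℂ) (hf : Integrable f) : Continuous (ft f) := by
  have hcF : Continuous (𝓕 f) :=
    VectorFourier.fourierIntegral_continuous Real.continuous_fourierChar (by fun_prop) hf
  have : ft f = fun ξ => (Real.sqrt (2 * Real.pi) : ℂ)⁻¹ * 𝓕 f (ξ / (2 * Real.pi)) := by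
    ext ξ; exact ft_eq f ξ
  rw [this]
  exact continuous_const.mul (hcF.comp (by fun_prop))

section sym
variable (φ : ℝ → ℝ) (hφ : ContDiff ℝ (⊤ : ℕ∞) φ)
    (hrange : ∀ ξ : ℝ, φ ξ ∈ Set.Icc (0 : ℝ) 1)
    (hone : ∀ ξ : ℝ, |ξ| ≤ 1 → φ ξ = 1) (hzero : ∀ ξ : ℝ, 2 ≤ |ξ| → φ ξ = 0)

include hrange hone hzero

lemma chi_nonneg (ξ : ℝ) : 0 ≤ φ ξ - φ (2 * ξ) := by
  rcases le_total |ξ| 1 with h | h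
  · rw [hone ξ h]; linarith [(hrange (2 * ξ)).2]
  · rw [hzero (2 * ξ) (by rw [abs_mul]; simp; linarith)]; linarith [(hrange ξ).1]

lemma psi_sq (ξ : ℝ) : psi φ ξ ^ 2 = φ ξ - φ (2 * ξ) := by
  rw [psi, Real.sq_sqrt (chi_nonneg φ hrange hone hzero ξ)]

lemma plo_eq (n : ℤ) (ξ : ℝ) (hξ : ξ ≠ 0) : plo φ (2 * (2 : ℝ) ^ n) ξ = φ (ξ / 2 ^ n) := by
  unfold plo
  rw [← (Equiv.subLeft n).tsum_eq]
  apply HasSum.tsum_eq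
  have h1 : HasSum (fun i : ℕ => φ (2 ^ i * (ξ / 2 ^ n)) - φ (2 ^ (i + 1) * (ξ / 2 ^ n))) (φ (ξ / 2 ^ n)) := by
    rw [hasSum_iff_tendsto_nat_of_nonneg]
    · have hs : ∀ m, ∑ i ∈ Finset.range m, (φ (2 ^ i * (ξ / 2 ^ n)) - φ (2 ^ (i + 1) * (ξ / 2 ^ n)))
          = φ (ξ / 2 ^ n) - φ (2 ^ m * (ξ / 2 ^ n)) := by
        intro m
        have := Finset.sum_range_sub' (fun i : ℕ => φ (2 ^ i * (ξ / 2 ^ n))) m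
        simpa using this
      have ht : Filter.Tendsto (fun m : ℕ => (2 : ℝ) ^ m * |ξ / 2 ^ n|) Filter.atTop Filter.atTop :=
        (tendsto_pow_atTop_atTop_of_one_lt (by norm_num)).atTop_mul_const (by positivity)
      refine tendsto_const_nhds.congr' ?_
      filter_upwards [ht.eventually_ge_atTop 2] with m hm
      rw [hs, hzero (2 ^ m * (ξ / 2 ^ n)), sub_zero]
      rw [abs_mul, abs_of_pos (by positivity : (0:ℝ) < 2 ^ m)]
      exact hm
    · intro i
      have := chi_nonneg φ hrange hone hzero (2 ^ i * (ξ / 2 ^ n))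
      rwa [show 2 * (2 ^ i * (ξ / 2 ^ n)) = 2 ^ (i + 1) * (ξ / 2 ^ n) by ring] at this
  have := HasSum.of_nat_of_neg_add_one
    (f := fun c : ℤ => if (2 : ℝ) ^ ((Equiv.subLeft n) c) < 2 * 2 ^ n then psi φ (ξ / 2 ^ ((Equiv.subLeft n) c)) ^ 2 else 0)
    (m := φ (ξ / 2 ^ n)) (m' := 0) ?_ ?_
  · simpa using this
  · convert h1 using 2 with i
    have e : (2 : ℝ) ^ (n - (i : ℤ)) = 2 ^ n / 2 ^ i := by
      rw [zpow_sub₀ (by norm_num), zpow_natCast]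
    have hlt : (2 : ℝ) ^ n / 2 ^ i < 2 * 2 ^ n := by
      have h2 : (0 : ℝ) < 2 ^ n := by positivity
      have h3 : (2 : ℝ) ^ n / 2 ^ i ≤ 2 ^ n := div_le_self h2.le (one_le_pow₀ (by norm_num))
      linarith
    simp only [Equiv.subLeft_apply]
    rw [e, if_pos hlt, psi_sq φ hrange hone hzero]
    have e2 : ξ / (2 ^ n / 2 ^ i) = 2 ^ i * (ξ / 2 ^ n) := by field_simp
    rw [e2, pow_succ]
    ring_nf
  · convert hasSum_zero using 2 with i
    simp only [Equiv.subLeft_apply]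
    rw [if_neg]
    have e : (2 : ℝ) ^ (n - -((i : ℤ) + 1)) = 2 ^ n * 2 ^ (i + 1) := by
      rw [sub_neg_eq_add, zpow_add₀ (by norm_num)]
      norm_cast
    rw [e, not_lt, pow_succ]
    have h2 : (0 : ℝ) < 2 ^ n := by positivity
    have h3 : (1 : ℝ) ≤ 2 ^ i := one_le_pow₀ (by norm_num)
    nlinarith

include hφ

lemma chi_compact : HasCompactSupport (fun ξ => φ ξ - φ (2 * ξ)) := by
  refine HasCompactSupport.of_support_subset_isCompact (isCompact_Icc (a := (-2 : ℝ)) (b := 2)) ?_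
  intro x hx
  rw [Set.mem_Icc, ← abs_le]
  by_contra h
  push Not at h
  apply hx
  simp only
  rw [hzero x h.le, hzero (2 * x) (by rw [abs_mul]; simp; linarith), sub_zero]

lemma mhi_eq (s : ℕ) (hs : 3 ≤ s) :
    (ContDiff ℝ 2 fun ξ => ∑' i : ℕ, ((2 : ℝ) ^ (i + 1))⁻¹ ^ s *
      (φ (2 ^ (i + 1) * ξ) - φ (2 * (2 ^ (i + 1) * ξ)))) ∧
    ∀ ξ, mhi φ s ξ = (1 - φ (2 * ξ)) + ∑' i : ℕ, ((2 : ℝ) ^ (i + 1))⁻¹ ^ s *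
      (φ (2 ^ (i + 1) * ξ) - φ (2 * (2 ^ (i + 1) * ξ))) := by
  have hχ : ContDiff ℝ (⊤ : ℕ∞) (fun ξ => φ ξ - φ (2 * ξ)) :=
    hφ.sub (hφ.comp (by fun_prop))
  have hχc := chi_compact φ hφ hrange hone hzero
  have hB : ∀ k : ℕ, ∃ B, ∀ x, ‖iteratedDeriv k (fun ξ => φ ξ - φ (2 * ξ)) x‖ ≤ B := by
    intro k
    obtain ⟨B, hB⟩ := (hχc.iteratedFDeriv (𝕜 := ℝ) k).exists_bound_of_continuous
      (hχ.continuous_iteratedFDeriv (by exact_mod_cast le_top))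
    exact ⟨B, fun x => by rw [← norm_iteratedFDeriv_eq_norm_iteratedDeriv]; exact hB x⟩
  choose B hB using hB
  have hB0 : ∀ k, 0 ≤ B k := fun k => (norm_nonneg _).trans (hB k 0)
  have hsum : Summable fun i : ℕ => ((2 : ℝ) ^ (i + 1))⁻¹ := by
    have := (summable_geometric_of_lt_one (r := (1/2 : ℝ)) (by norm_num) (by norm_num))
    have := (summable_nat_add_iff 1).2 this
    simpa using this
  have hbd : ∀ (k : ℕ) (i : ℕ) (x : ℝ), k ≤ 2 →
      ‖iteratedFDeriv ℝ k (fun ξ => ((2 : ℝ) ^ (i + 1))⁻¹ ^ s *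
      (φ (2 ^ (i + 1) * ξ) - φ (2 * (2 ^ (i + 1) * ξ)))) x‖ ≤ B k * ((2 : ℝ) ^ (i + 1))⁻¹ := by
    intro k i x hk
    set c : ℝ := (2 : ℝ) ^ (i + 1) with hc
    have hc1 : 1 ≤ c := one_le_pow₀ (by norm_num)
    have hc0 : 0 < c := by positivity
    have hk' : ContDiff ℝ k (fun ξ => φ ξ - φ (2 * ξ)) := hχ.of_le (by exact_mod_cast le_top)
    rw [norm_iteratedFDeriv_eq_norm_iteratedDeriv, iteratedDeriv_const_mul_field,
      iteratedDeriv_comp_const_mul (f := fun ξ => φ ξ - φ (2 * ξ)) hk' c]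
    rw [norm_mul, norm_mul, norm_pow, norm_pow, norm_inv, Real.norm_of_nonneg hc0.le, ← mul_assoc, mul_comm (B k)]
    refine mul_le_mul ?_ (hB k _) (norm_nonneg _) (by positivity)
    rw [inv_pow, inv_mul_le_iff₀ (by positivity), ← div_eq_mul_inv, le_div_iff₀ hc0, ← pow_succ]
    exact pow_le_pow_right₀ hc1 (by omega)
  refine ⟨?_, ?_⟩
  · have := contDiff_tsum (𝕜 := ℝ) (N := (2 : ℕ∞)) (f := fun (i : ℕ) ξ => ((2 : ℝ) ^ (i + 1))⁻¹ ^ s *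
      (φ (2 ^ (i + 1) * ξ) - φ (2 * (2 ^ (i + 1) * ξ))))
      (v := fun k i => B k * ((2 : ℝ) ^ (i + 1))⁻¹) ?_ ?_ ?_
    · exact_mod_cast this
    · intro i
      refine contDiff_const.mul ?_
      have h2 : ContDiff ℝ (2 : ℕ∞) (fun ξ => φ ξ - φ (2 * ξ)) := hχ.of_le (by exact_mod_cast le_top)
      exact h2.comp (g := fun ξ => φ ξ - φ (2 * ξ)) (f := fun ξ => 2 ^ (i + 1) * ξ) (by fun_prop)
    · intro k _
      exact hsum.mul_left _
    · intro k i x hk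
      exact hbd k i x (by exact_mod_cast hk)
  · intro ξ
    unfold mhi
    apply HasSum.tsum_eq
    apply HasSum.of_nat_of_neg_add_one
    · have h1 : HasSum (fun i : ℕ => φ (ξ / 2 ^ i) - φ (2 * (ξ / 2 ^ i))) (1 - φ (2 * ξ)) := by
        rw [hasSum_iff_tendsto_nat_of_nonneg (fun i => chi_nonneg φ hrange hone hzero _)]
        have hs : ∀ m, ∑ i ∈ Finset.range m, (φ (ξ / 2 ^ i) - φ (2 * (ξ / 2 ^ i)))
            = φ (2 * (ξ / 2 ^ m)) - φ (2 * ξ) := by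
          intro m
          have := Finset.sum_range_sub (fun i : ℕ => φ (2 * (ξ / 2 ^ i))) m
          simp only [pow_zero, div_one] at this
          rw [← this]
          refine Finset.sum_congr rfl fun i _ => ?_
          congr 2
          rw [pow_succ]; field_simp
        simp_rw [hs]
        refine Filter.Tendsto.sub_const ?_ _
        have hlim : Filter.Tendsto (fun m : ℕ => 2 * (ξ / 2 ^ m)) Filter.atTop (nhds 0) := by
          have := (tendsto_pow_atTop_nhds_zero_of_lt_one (r := (1/2 : ℝ)) (by norm_num) (by norm_num)).const_mul (2 * ξ)
          rw [mul_zero] at this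
          refine this.congr fun m => ?_
          rw [one_div, inv_pow]; ring
        have := (hφ.continuous.tendsto 0).comp hlim
        rwa [hone 0 (by simp)] at this
      convert h1 using 2 with i
      rw [if_neg (by omega), one_mul, zpow_natCast, psi_sq φ hrange hone hzero]
    · have hsm : Summable (fun i : ℕ => ((2 : ℝ) ^ (i + 1))⁻¹ ^ s *
          (φ (2 ^ (i + 1) * ξ) - φ (2 * (2 ^ (i + 1) * ξ)))) := by
        refine Summable.of_norm_bounded (hsum.mul_left (B 0)) fun i => ?_
        have := hbd 0 i ξ (by norm_num)
        rwa [norm_iteratedFDeriv_zero] at this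
      convert hsm.hasSum using 2 with i
      have e : (2 : ℝ) ^ (-((i : ℤ) + 1)) = (2 ^ (i + 1))⁻¹ := by
        rw [zpow_neg]; norm_cast
      rw [if_pos (by omega), e, psi_sq φ hrange hone hzero, div_inv_eq_mul, mul_comm ξ]

lemma mhi_contDiff (s : ℕ) (hs : 3 ≤ s) : ContDiff ℝ 2 (mhi φ s) := by
  obtain ⟨h1, h2⟩ := mhi_eq φ hφ hrange hone hzero s hs
  rw [funext h2]
  refine ContDiff.add (contDiff_const.sub ?_) h1
  exact (contDiff_infty.1 hφ 2 : ContDiff ℝ 2 φ).comp (by fun_prop)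

lemma mhi_one (s : ℕ) (hs : 3 ≤ s) (ξ : ℝ) (hξ : 1 ≤ |ξ|) : mhi φ s ξ = 1 := by
  obtain ⟨h1, h2⟩ := mhi_eq φ hφ hrange hone hzero s hs
  rw [h2, hzero (2 * ξ) (by rw [abs_mul]; simp; linarith)]
  have : ∀ i : ℕ, ((2 : ℝ) ^ (i + 1))⁻¹ ^ s *
      (φ (2 ^ (i + 1) * ξ) - φ (2 * (2 ^ (i + 1) * ξ))) = 0 := by
    intro i
    have h3 : (1 : ℝ) ≤ 2 ^ i := one_le_pow₀ (by norm_num)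
    have h4 : 2 ≤ |2 ^ (i + 1) * ξ| := by
      rw [abs_mul, abs_of_pos (by positivity : (0:ℝ) < 2 ^ (i + 1)), pow_succ]
      nlinarith
    rw [hzero _ h4, hzero (2 * _) (by rw [abs_mul]; simp only [Nat.abs_ofNat]; linarith)]
    simp
  simp_rw [this]
  simp

end sym

lemma conv_identity (F G : ℝ → ℂ) (hF : Integrable F) (hG : Integrable G) (b x : ℝ) :
    ∫ u : ℝ, G u * ∫ ξ : ℝ, Complex.exp (Complex.I * (ξ : ℂ) * ((x - b * u : ℝ) : ℂ)) * F ξ =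
    ∫ ξ : ℝ, Complex.exp (Complex.I * (ξ : ℂ) * (x : ℂ)) *
      (∫ u : ℝ, Complex.exp (((-(b * u * ξ) : ℝ) : ℂ) * Complex.I) * G u) * F ξ := by
  have hint : Integrable (Function.uncurry fun u ξ : ℝ =>
      G u * (Complex.exp (Complex.I * (ξ : ℂ) * ((x - b * u : ℝ) : ℂ)) * F ξ)) (volume.prod volume) := by
    have h0 : Integrable (fun z : ℝ × ℝ => G z.1 * F z.2) (volume.prod volume) := hG.mul_prod hF
    have hc : Continuous (fun z : ℝ × ℝ =>
        Complex.exp (Complex.I * (z.2 : ℂ) * ((x - b * z.1 : ℝ) : ℂ))) := by fun_prop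
    have h1 := h0.bdd_mul (c := 1) hc.aestronglyMeasurable (Filter.Eventually.of_forall fun z => by
      rw [show Complex.I * (z.2 : ℂ) * ((x - b * z.1 : ℝ) : ℂ) = ((z.2 * (x - b * z.1) : ℝ) : ℂ) * Complex.I by
        push_cast; ring, Complex.norm_exp_ofReal_mul_I])
    refine h1.congr (Filter.Eventually.of_forall fun z => ?_)
    simp only [Function.uncurry]
    ring
  simp_rw [← integral_const_mul]
  rw [integral_integral_swap hint]
  refine integral_congr_ae (Filter.Eventually.of_forall fun ξ => ?_)
  simp only
  rw [← integral_mul_const]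
  refine integral_congr_ae (Filter.Eventually.of_forall fun u => ?_)
  simp only
  have : Complex.exp (Complex.I * (ξ : ℂ) * ((x - b * u : ℝ) : ℂ)) =
      Complex.exp (Complex.I * (ξ : ℂ) * (x : ℂ)) * Complex.exp (((-(b * u * ξ) : ℝ) : ℂ) * Complex.I) := by
    rw [← Complex.exp_add]
    congr 1
    push_cast
    ring
  rw [this]
  ring

lemma osc_cont (F : ℝ → ℂ) (hF : Integrable F) :
    Continuous fun x : ℝ => ∫ ξ : ℝ, Complex.exp (Complex.I * (ξ : ℂ) * (x : ℂ)) * F ξ := by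
  refine continuous_of_dominated (bound := fun ξ => ‖F ξ‖) ?_ ?_ hF.norm ?_
  · intro x
    have : Continuous (fun ξ : ℝ => Complex.exp (Complex.I * (ξ : ℂ) * (x : ℂ))) := by fun_prop
    exact this.aestronglyMeasurable.mul hF.1
  · intro x
    refine Filter.Eventually.of_forall fun ξ => ?_
    rw [norm_mul, show Complex.I * (ξ : ℂ) * (x : ℂ) = ((ξ * x : ℝ) : ℂ) * Complex.I by push_cast; ring,
      Complex.norm_exp_ofReal_mul_I, one_mul]
  · refine Filter.Eventually.of_forall fun ξ => ?_
    fun_prop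

/-- Bernstein-type inequality
`‖Π²_{<N} q^{(s+j)}‖_{L^p} ≲ N^j ‖P²_{<2N} q^{(s)}‖_{L^p}` uniformly in `N ∈ 2^ℤ`. -/
theorem stmt9 (φ : ℝ → ℝ) (hφ : ContDiff ℝ (⊤ : ℕ∞) φ)
    (hrange : ∀ ξ : ℝ, φ ξ ∈ Set.Icc (0 : ℝ) 1)
    (hone : ∀ ξ : ℝ, |ξ| ≤ 1 → φ ξ = 1) (hzero : ∀ ξ : ℝ, 2 ≤ |ξ| → φ ξ = 0)
    (s : ℕ) (hs : 3 ≤ s) (p : ℝ≥0∞) (hp : 1 ≤ p) (j : ℕ) (hj : 0 < j) :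
    ∃ C : ℝ≥0, 0 < C ∧ ∀ n : ℤ, ∀ q : SchwartzMap ℝ ℂ,
      eLpNorm (fmul (fun ξ => 1 - (mhi φ s (ξ / (2 : ℝ) ^ n)) ^ 2)
          (iteratedDeriv (s + j) ⇑q)) p volume ≤
        C * ENNReal.ofReal (((2 : ℝ) ^ n) ^ j) *
          eLpNorm (fmul (plo φ (2 * (2 : ℝ) ^ n)) (iteratedDeriv s ⇑q)) p volume := by
  set M : ℝ → ℂ := fun ξ => (Complex.I * ξ) ^ j * ((1 - (mhi φ s ξ) ^ 2 : ℝ) : ℂ) with hMdef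
  have hM : ContDiff ℝ 2 M := by
    have h1 := mhi_contDiff φ hφ hrange hone hzero s hs
    have h2 : ContDiff ℝ 2 (fun ξ : ℝ => (ξ : ℂ)) := Complex.ofRealCLM.contDiff
    have h3 : ContDiff ℝ 2 (fun ξ : ℝ => ((1 - (mhi φ s ξ) ^ 2 : ℝ) : ℂ)) :=
      h2.comp (contDiff_const.sub (h1.pow 2))
    exact ((contDiff_const.mul h2).pow j).mul h3
  have hM0 : ∀ ξ, 1 ≤ |ξ| → M ξ = 0 := by
    intro ξ h
    simp [hMdef, mhi_one φ hφ hrange hone hzero s hs ξ h]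
  have hMc : HasCompactSupport M := by
    refine HasCompactSupport.of_support_subset_isCompact (isCompact_Icc (a := (-1 : ℝ)) (b := 1)) ?_
    intro x hx
    rw [Set.mem_Icc, ← abs_le]
    by_contra h
    push Not at h
    exact hx (hM0 x h.le)
  have hFM := kernel_integrable M hM hMc
  set G : ℝ → ℂ := 𝓕⁻ M with hGdef
  have hG : Integrable G := by
    have : G = fun x => 𝓕 M (-x) := by ext x; exact Real.fourierInv_eq_fourier_neg M x
    rw [this]; exact hFM.comp_neg
  have hinv : 𝓕 G = M :=
    hM.continuous.fourier_fourierInv_eq (hM.continuous.integrable_of_hasCompactSupport hMc) hFM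
  set ν : Measure ℝ := volume.withDensity (fun u => ‖G u‖ₑ) with hν
  haveI : IsFiniteMeasure ν := isFiniteMeasure_withDensity hG.2.ne
  refine ⟨(ν Set.univ).toNNReal + 1, by positivity, fun n q => ?_⟩
  set N : ℝ := (2 : ℝ) ^ n with hN
  have hN0 : 0 < N := by positivity
  obtain ⟨g, hg⟩ := schwartz_iter q s
  set F : ℝ → ℂ := fun ξ => (φ (ξ / N) : ℂ) * ft (iteratedDeriv s ⇑q) ξ with hFdef
  have hft : Continuous (ft (iteratedDeriv s ⇑q)) := ft_cont _ (by rw [← hg]; exact g.integrable)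
  have hFi : Integrable F := by
    have hc : Continuous F := by
      have := hφ.continuous
      exact (Complex.continuous_ofReal.comp (this.comp (by fun_prop))).mul hft
    refine hc.integrable_of_hasCompactSupport ?_
    refine HasCompactSupport.of_support_subset_isCompact (isCompact_Icc (a := (-(2 * N) : ℝ)) (b := 2 * N)) ?_
    intro x hx
    rw [Set.mem_Icc, ← abs_le]
    by_contra h
    push Not at h
    apply hx
    have : φ (x / N) = 0 := by
      apply hzero
      rw [abs_div, abs_of_pos hN0, le_div_iff₀ hN0]
      exact h.le
    simp [hFdef, this]
  set f : ℝ → ℂ := fmul (plo φ (2 * N)) (iteratedDeriv s ⇑q) with hfdef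
  have hne : ∀ᵐ ξ : ℝ, ξ ≠ 0 := by simp [ae_iff]
  have hf : ∀ x, f x = (Real.sqrt (2 * Real.pi) : ℂ)⁻¹ *
      ∫ ξ : ℝ, Complex.exp (Complex.I * (ξ : ℂ) * (x : ℂ)) * F ξ := by
    intro x
    simp only [hfdef, fmul]
    congr 1
    refine integral_congr_ae ?_
    filter_upwards [hne] with ξ hξ
    rw [plo_eq φ hrange hone hzero n ξ hξ, mul_assoc]
  have hfc : Continuous f := by
    rw [funext hf]
    exact continuous_const.mul (osc_cont F hFi)
  set h : ℝ → ℂ := fun x => ∫ u : ℝ, G u * f (x - (2 * Real.pi / N) * u) with hh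
  have hlhs : fmul (fun ξ => 1 - (mhi φ s (ξ / N)) ^ 2) (iteratedDeriv (s + j) ⇑q) =
      ((N ^ j : ℝ) : ℂ) • h := by
    ext x
    have hconv := conv_identity F G hFi hG (2 * Real.pi / N) x
    have e1 : h x = (Real.sqrt (2 * Real.pi) : ℂ)⁻¹ * ∫ u : ℝ, G u * ∫ ξ : ℝ,
        Complex.exp (Complex.I * (ξ : ℂ) * ((x - (2 * Real.pi / N) * u : ℝ) : ℂ)) * F ξ := by
      rw [hh, ← integral_const_mul]
      refine integral_congr_ae (Filter.Eventually.of_forall fun u => ?_)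
      simp only
      rw [hf]; ring
    rw [Pi.smul_apply, e1, hconv, smul_eq_mul, mul_left_comm, ← integral_const_mul, fmul]
    congr 1
    refine integral_congr_ae (Filter.Eventually.of_forall fun ξ => ?_)
    simp only
    have e2 : (∫ u : ℝ, Complex.exp (((-(2 * Real.pi / N * u * ξ) : ℝ) : ℂ) * Complex.I) * G u) = M (ξ / N) := by
      rw [← hinv, Real.fourier_real_eq_integral_exp_smul]
      refine integral_congr_ae (Filter.Eventually.of_forall fun u => ?_)
      simp only [smul_eq_mul]
      congr 4
      ring
    have e3 : M (ξ / N) * (φ (ξ / N) : ℂ) = M (ξ / N) := by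
      rcases le_total |ξ / N| 1 with h1 | h1
      · rw [hone _ h1]; simp
      · rw [hM0 _ h1]; simp
    have e4 : ((N ^ j : ℝ) : ℂ) * M (ξ / N) =
        (Complex.I * ξ) ^ j * ((1 - (mhi φ s (ξ / N)) ^ 2 : ℝ) : ℂ) := by
      have hNc : (N : ℂ) ≠ 0 := by exact_mod_cast hN0.ne'
      simp only [hMdef]
      rw [← mul_assoc, Complex.ofReal_pow, ← mul_pow]
      congr 2
      push_cast
      field_simp
    rw [e2, ft_iter]
    simp only [hFdef]
    rw [ft_iter]
    calc _ = Complex.exp (Complex.I * ξ * x) * ((Complex.I * ξ) ^ j * ((1 - (mhi φ s (ξ / N)) ^ 2 : ℝ) : ℂ)) *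
          ((Complex.I * ξ) ^ s * ft q ξ) := by rw [pow_add]; ring
      _ = Complex.exp (Complex.I * ξ * x) * (((N ^ j : ℝ) : ℂ) * (M (ξ / N) * (φ (ξ / N) : ℂ))) *
          ((Complex.I * ξ) ^ s * ft q ξ) := by rw [e3, e4]
      _ = _ := by ring
  have hb : eLpNorm h p volume ≤ ν Set.univ * eLpNorm f p volume := by
    refine conv_bound ν f h hfc (2 * Real.pi / N) (fun x => ?_) p hp
    have hm : Measurable fun u => ‖f (x - 2 * Real.pi / N * u)‖ₑ :=
      (hfc.comp (by fun_prop)).enorm.measurable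
    rw [hν, lintegral_withDensity_eq_lintegral_mul₀ hG.1.enorm hm.aemeasurable]
    refine (enorm_integral_le_lintegral_enorm _).trans (le_of_eq ?_)
    refine lintegral_congr fun u => ?_
    simp [enorm_mul]
  rw [hlhs, eLpNorm_const_smul]
  have e5 : ‖((N ^ j : ℝ) : ℂ)‖ₑ = ENNReal.ofReal (N ^ j) := by
    rw [← ofReal_norm_eq_enorm, Complex.norm_real, Real.norm_of_nonneg (by positivity)]
  rw [e5]
  calc ENNReal.ofReal (N ^ j) * eLpNorm h p volume
      ≤ ENNReal.ofReal (N ^ j) * (ν Set.univ * eLpNorm f p volume) := by gcongr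
    _ = ν Set.univ * ENNReal.ofReal (N ^ j) * eLpNorm f p volume := by ring
    _ ≤ _ := by
      gcongr
      rw [ENNReal.coe_add, ENNReal.coe_toNNReal (measure_ne_top _ _)]
      exact le_self_add
end

section
/- For every κ > 0, all Schwartz functions f, h : ℝ → ℂ, and every x ∈ ℝ, one has 16κ⁵ ∬_{ℝ×ℝ} (2κ)^{-1}e^{-κ|x−y|} f(y) (2κ)^{-1}e^{-κ|y−z|} h(z) (2κ)^{-1}e^{-κ|z−x|} dy dz = 3 f(x)h(x) − 3 (Rf″)(x)(Rh″)(x) − 20κ² (Rf′)(x)(Rh′)(x) + 4κ² R[((Rf′)(Rh′))″](x) + 20κ² [((Rf)(Rh))″](x) + 8κ² R[((Rf)(Rh))⁗](x), where R = R₀(2κ) denotes convolution with (4κ)^{-1} e^{-2κ|·|}. (In operator form this is the identity 16κ⁵⟨δₓ, R₀ f R₀ h R₀ δₓ⟩ = 3fh − 3[R₀(2κ)f″][R₀(2κ)h″] + 4κ²(−5 + R₀(2κ)∂²)([R₀(2κ)f′][R₀(2κ)h′]) + 4κ²(5∂² + 2R₀(2κ)∂⁴)([R₀(2κ)f][R₀(2κ)h]).)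 -/
open MeasureTheory

/-- `R₀(2κ)`: convolution with `(4κ)⁻¹ e^{-2κ|·|}`. -/
noncomputable def Rop (κ : ℝ) (g : ℝ → ℂ) (x : ℝ) : ℂ :=
  (((4 * κ)⁻¹ : ℝ) : ℂ) * ∫ y : ℝ, ((Real.exp (-(2 * κ) * |x - y|) : ℝ) : ℂ) * g y


open Set Filter Topology

namespace QI

/-- bounded continuous -/
def BC (u : ℝ → ℂ) : Prop := Continuous u ∧ ∃ C : ℝ, ∀ x, ‖u x‖ ≤ C

lemma BC.add {u v : ℝ → ℂ} (hu : BC u) (hv : BC v) : BC (fun x => u x + v x) := by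
  obtain ⟨hu, C, hC⟩ := hu
  obtain ⟨hv, D, hD⟩ := hv
  exact ⟨hu.add hv, C + D, fun x => (norm_add_le _ _).trans (add_le_add (hC x) (hD x))⟩

lemma BC.mul {u v : ℝ → ℂ} (hu : BC u) (hv : BC v) : BC (fun x => u x * v x) := by
  obtain ⟨hu, C, hC⟩ := hu
  obtain ⟨hv, D, hD⟩ := hv
  refine ⟨hu.mul hv, C * D, fun x => ?_⟩
  rw [norm_mul]
  exact mul_le_mul (hC x) (hD x) (norm_nonneg _) ((norm_nonneg _).trans (hC x))

lemma BC.const (c : ℂ) : BC (fun _ => c) := ⟨continuous_const, ‖c‖, fun _ => le_rfl⟩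

lemma BC.neg {u : ℝ → ℂ} (hu : BC u) : BC (fun x => - u x) := by
  simpa using (BC.const (-1)).mul hu

lemma BC.sub {u v : ℝ → ℂ} (hu : BC u) (hv : BC v) : BC (fun x => u x - v x) := by
  simpa [sub_eq_add_neg] using hu.add hv.neg

lemma BC.refl {u : ℝ → ℂ} (hu : BC u) : BC (fun x => u (-x)) :=
  ⟨hu.1.comp continuous_neg, hu.2.imp fun _ h x => h (-x)⟩

lemma BC.schwartz (f : SchwartzMap ℝ ℂ) : BC f := by
  refine ⟨f.continuous, ?_⟩
  obtain ⟨C, _, hC⟩ := f.decay 0 0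
  exact ⟨C, fun x => by simpa using hC x⟩

noncomputable def E (a s : ℝ) : ℂ := ((Real.exp (-(a * s)) : ℝ) : ℂ)

noncomputable def Bo (a : ℝ) (g : ℝ → ℂ) (x : ℝ) : ℂ := ∫ t in Ioi x, E a (t - x) * g t

noncomputable def Ao (a : ℝ) (g : ℝ → ℂ) (x : ℝ) : ℂ := Bo a (fun t => g (-t)) (-x)

lemma hd_neg {u : ℝ → ℂ} {u' : ℂ} (x : ℝ) (h : HasDerivAt u u' (-x)) :
    HasDerivAt (fun y => u (-y)) (-u') x := by
  have := HasDerivAt.scomp x h (hasDerivAt_neg x)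
  exact this.congr_deriv (by simp)

lemma E_add (a s t : ℝ) : E a (s + t) = E a s * E a t := by
  unfold E; rw [← Complex.ofReal_mul, ← Real.exp_add]; congr 2; ring

lemma E_zero (a : ℝ) : E a 0 = 1 := by simp [E]

lemma E_cont (a : ℝ) : Continuous (E a) := by unfold E; fun_prop

lemma E_norm (a s : ℝ) : ‖E a s‖ = Real.exp (-(a * s)) := by
  unfold E; rw [Complex.norm_real, Real.norm_eq_abs, abs_of_pos (Real.exp_pos _)]

lemma E_deriv (a s : ℝ) : HasDerivAt (E a) (-a * E a s) s := by
  have : HasDerivAt (fun s : ℝ => Real.exp (-(a * s))) (Real.exp (-(a*s)) * (-(a * 1))) s :=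
    (((hasDerivAt_id s).const_mul a).neg).exp
  have := this.ofReal_comp
  exact this.congr_deriv (by unfold E; push_cast; ring)

lemma exp_int {a : ℝ} (ha : 0 < a) (x c : ℝ) :
    IntegrableOn (fun t => Real.exp (-(a * (t - x)))) (Ioi c) := by
  have := (integrableOn_exp_mul_Ioi (neg_lt_zero.2 ha) c).const_mul (Real.exp (a * x))
  refine this.congr (Filter.Eventually.of_forall fun t => ?_)
  simp only
  rw [← Real.exp_add]; congr 1; ring

lemma exp_integral {a : ℝ} (ha : 0 < a) (x : ℝ) :
    ∫ t in Ioi x, Real.exp (-(a * (t - x))) = 1 / a := by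
  have h : (fun t => Real.exp (-(a * (t - x)))) = fun t => Real.exp (a * x) * Real.exp (-a * t) := by
    ext t; rw [← Real.exp_add]; congr 1; ring
  rw [h, integral_const_mul, integral_exp_mul_Ioi (neg_lt_zero.2 ha), neg_div_neg_eq,
    ← mul_div_assoc, ← Real.exp_add]
  simp

lemma Bo_int {a : ℝ} (ha : 0 < a) {g : ℝ → ℂ} (hg : BC g) (x c : ℝ) :
    IntegrableOn (fun t => E a (t - x) * g t) (Ioi c) := by
  obtain ⟨hg, C, hC⟩ := hg
  refine Integrable.mono' ((exp_int ha x c).mul_const C) ?_ ?_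
  · exact (((E_cont a).comp (by fun_prop : Continuous fun t : ℝ => t - x)).mul hg).aestronglyMeasurable
  · refine Filter.Eventually.of_forall fun t => ?_
    rw [norm_mul, E_norm]
    exact mul_le_mul_of_nonneg_left (hC t) (Real.exp_pos _).le

lemma Bo_deriv {a : ℝ} (ha : 0 < a) {g : ℝ → ℂ} (hg : BC g) (x : ℝ) :
    HasDerivAt (Bo a g) (a * Bo a g x - g x) x := by
  have hc : Continuous fun t => E a (t - 0) * g t :=
    ((E_cont a).comp (by fun_prop : Continuous fun t : ℝ => t - 0)).mul hg.1
  have key : Bo a g = fun y => E a (-y) * ((∫ t in Ioi 0, E a (t - 0) * g t)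
      - ∫ t in (0:ℝ)..y, E a (t - 0) * g t) := by
    ext y
    rw [← intervalIntegral.integral_interval_add_Ioi (Bo_int ha hg 0 0) (Bo_int ha hg 0 y),
      add_sub_cancel_left, ← integral_const_mul]
    unfold Bo
    congr 1; ext t
    rw [← mul_assoc, ← E_add]; congr 2; ring
  have h1 : HasDerivAt (fun y => E a (-y)) (a * E a (-x)) x := by
    have := hd_neg x (E_deriv a (-x))
    exact this.congr_deriv (by ring)
  have h2 := intervalIntegral.integral_hasDerivAt_right (hc.intervalIntegrable 0 x)
    (hc.stronglyMeasurableAtFilter _ _) hc.continuousAt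
  have h3 := h1.mul (h2.const_sub (∫ t in Ioi 0, E a (t - 0) * g t))
  have hx := congrFun key x
  rw [hx]
  rw [key]
  refine h3.congr_deriv ?_
  have : E a (-x) * E a (x - 0) = 1 := by rw [← E_add, ← E_zero a]; congr 1; ring
  linear_combination (- g x) * this

lemma Bo_bdd {a : ℝ} (ha : 0 < a) {g : ℝ → ℂ} (hg : BC g) : BC (Bo a g) := by
  refine ⟨continuous_iff_continuousAt.2 fun x => (Bo_deriv ha hg x).continuousAt, ?_⟩
  obtain ⟨hg, C, hC⟩ := hg
  refine ⟨1 / a * C, fun x => ?_⟩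
  rw [← exp_integral ha x, ← integral_mul_const]
  refine norm_integral_le_of_norm_le ((exp_int ha x x).mul_const C) ?_
  refine Filter.Eventually.of_forall fun t => ?_
  rw [norm_mul, E_norm]
  exact mul_le_mul_of_nonneg_left (hC t) (Real.exp_pos _).le

lemma Bo_unique {a : ℝ} (ha : 0 < a) {u g : ℝ → ℂ} (hu : BC u) (hg : BC g)
    (hd : ∀ x, HasDerivAt u (a * u x - g x) x) (x : ℝ) : Bo a g x = u x := by
  have hd' : ∀ t, HasDerivAt (fun t => - (E a (t - x) * u t)) (E a (t - x) * g t) t := by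
    intro t
    have h1 : HasDerivAt (fun t => E a (t - x)) (-a * E a (t - x)) t :=
      HasDerivAt.comp_sub_const t x (E_deriv a (t - x))
    exact (h1.mul (hd t)).neg.congr_deriv (by ring)
  have hl : Tendsto (fun t => - (E a (t - x) * u t)) atTop (𝓝 0) := by
    obtain ⟨C, hC⟩ := hu.2
    have : Tendsto (fun t : ℝ => Real.exp (-(a * (t - x))) * C) atTop (𝓝 (0 * C)) := by
      refine Tendsto.mul_const C (Real.tendsto_exp_neg_atTop_nhds_zero.comp ?_)
      exact (tendsto_atTop_add_const_right _ (-x) tendsto_id).const_mul_atTop ha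
    rw [zero_mul] at this
    refine squeeze_zero_norm (fun t => ?_) this
    rw [norm_neg, norm_mul, E_norm]
    exact mul_le_mul_of_nonneg_left (hC t) (Real.exp_pos _).le
  have := integral_Ioi_of_hasDerivAt_of_tendsto (a := x) (hd' x).continuousAt.continuousWithinAt
    (fun t _ => hd' t) (Bo_int ha hg x x) hl
  unfold Bo
  rw [this]
  simp [E_zero]

lemma Ao_deriv {a : ℝ} (ha : 0 < a) {g : ℝ → ℂ} (hg : BC g) (x : ℝ) :
    HasDerivAt (Ao a g) (g x - a * Ao a g x) x := by
  have := hd_neg x (Bo_deriv ha hg.refl (-x))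
  exact this.congr_deriv (by simp [Ao])

lemma Ao_bdd {a : ℝ} (ha : 0 < a) {g : ℝ → ℂ} (hg : BC g) : BC (Ao a g) :=
  (Bo_bdd ha hg.refl).refl

lemma Ao_unique {a : ℝ} (ha : 0 < a) {u g : ℝ → ℂ} (hu : BC u) (hg : BC g)
    (hd : ∀ x, HasDerivAt u (g x - a * u x) x) (x : ℝ) : Ao a g x = u x := by
  unfold Ao
  rw [Bo_unique ha (u := fun x => u (-x)) hu.refl hg.refl]
  · simp
  · intro x
    have := hd_neg x (hd (-x))
    exact this.congr_deriv (by ring)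

lemma Ao_eq (a : ℝ) (g : ℝ → ℂ) (x : ℝ) : Ao a g x = ∫ t in Iic x, E a (x - t) * g t := by
  unfold Ao Bo
  have := integral_comp_neg_Ioi (-x) (fun t => E a (x - t) * g t)
  rw [neg_neg] at this
  rw [← this]
  congr 1; ext t; congr 2; ring

lemma Ao_int {a : ℝ} (ha : 0 < a) {g : ℝ → ℂ} (hg : BC g) (x c : ℝ) :
    IntegrableOn (fun t => E a (x - t) * g t) (Iic c) := by
  have h := Bo_int ha hg.refl (-x) (-c)
  have := IntegrableOn.comp_neg ((integrableOn_Ici_iff_integrableOn_Ioi).2 h)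
  simpa [neg_add_eq_sub] using this


lemma Rop_eq {κ : ℝ} (hκ : 0 < κ) {g : ℝ → ℂ} (hg : BC g) (x : ℝ) :
    Rop κ g x = (4 * (κ : ℂ))⁻¹ * (Ao (2 * κ) g x + Bo (2 * κ) g x) := by
  have ha : 0 < 2 * κ := by linarith
  unfold Rop
  have e1 : ∀ t ∈ Iic x, E (2 * κ) (x - t) * g t
      = ((Real.exp (-(2 * κ) * |x - t|) : ℝ) : ℂ) * g t := by
    intro t ht
    rw [abs_of_nonneg (sub_nonneg.2 ht)]; unfold E; rw [neg_mul]
  have e2 : ∀ t ∈ Ioi x, E (2 * κ) (t - x) * g t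
      = ((Real.exp (-(2 * κ) * |x - t|) : ℝ) : ℂ) * g t := by
    intro t ht
    rw [abs_sub_comm, abs_of_nonneg (sub_nonneg.2 (le_of_lt ht))]; unfold E; rw [neg_mul]
  have i1 := (Ao_int ha hg x x).congr_fun e1 measurableSet_Iic
  have i2 := (Bo_int ha hg x x).congr_fun e2 measurableSet_Ioi
  rw [← intervalIntegral.integral_Iic_add_Ioi i1 i2, Ao_eq, Bo,
    setIntegral_congr_fun measurableSet_Iic e1, setIntegral_congr_fun measurableSet_Ioi e2]
  push_cast; rfl

noncomputable def Dop (κ : ℝ) (g : ℝ → ℂ) (x : ℝ) : ℂ :=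
  2⁻¹ * (Bo (2 * κ) g x - Ao (2 * κ) g x)

lemma Rop_bdd {κ : ℝ} (hκ : 0 < κ) {g : ℝ → ℂ} (hg : BC g) : BC (Rop κ g) := by
  have ha : 0 < 2 * κ := by linarith
  rw [funext (Rop_eq hκ hg)]
  exact (BC.const _).mul ((Ao_bdd ha hg).add (Bo_bdd ha hg))

lemma Dop_bdd {κ : ℝ} (hκ : 0 < κ) {g : ℝ → ℂ} (hg : BC g) : BC (Dop κ g) := by
  have ha : 0 < 2 * κ := by linarith
  exact (BC.const _).mul ((Bo_bdd ha hg).sub (Ao_bdd ha hg))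

lemma Rop_deriv {κ : ℝ} (hκ : 0 < κ) {g : ℝ → ℂ} (hg : BC g) (x : ℝ) :
    HasDerivAt (Rop κ g) (Dop κ g x) x := by
  have ha : 0 < 2 * κ := by linarith
  have hk : (κ : ℂ) ≠ 0 := by exact_mod_cast hκ.ne'
  rw [funext (Rop_eq hκ hg)]
  refine (((Ao_deriv ha hg x).add (Bo_deriv ha hg x)).const_mul _).congr_deriv ?_
  unfold Dop; push_cast; field_simp; ring

lemma Dop_deriv {κ : ℝ} (hκ : 0 < κ) {g : ℝ → ℂ} (hg : BC g) (x : ℝ) :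
    HasDerivAt (Dop κ g) (4 * κ ^ 2 * Rop κ g x - g x) x := by
  have ha : 0 < 2 * κ := by linarith
  have hk : (κ : ℂ) ≠ 0 := by exact_mod_cast hκ.ne'
  rw [Rop_eq hκ hg]
  refine (((Bo_deriv ha hg x).sub (Ao_deriv ha hg x)).const_mul (2⁻¹ : ℂ)).congr_deriv ?_
  push_cast; field_simp; ring

lemma Bo_d {a : ℝ} (ha : 0 < a) {u u1 : ℝ → ℂ} (hu : BC u) (hu1 : BC u1)
    (hd : ∀ x, HasDerivAt u (u1 x) x) (x : ℝ) : Bo a u1 x = a * Bo a u x - u x := by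
  refine Bo_unique ha (u := fun x => a * Bo a u x - u x)
    (((BC.const _).mul (Bo_bdd ha hu)).sub hu) hu1 (fun x => ?_) x
  exact (((Bo_deriv ha hu x).const_mul (a : ℂ)).sub (hd x)).congr_deriv (by ring)

lemma Ao_d {a : ℝ} (ha : 0 < a) {u u1 : ℝ → ℂ} (hu : BC u) (hu1 : BC u1)
    (hd : ∀ x, HasDerivAt u (u1 x) x) (x : ℝ) : Ao a u1 x = u x - a * Ao a u x := by
  refine Ao_unique ha (u := fun x => u x - a * Ao a u x)
    (hu.sub ((BC.const _).mul (Ao_bdd ha hu))) hu1 (fun x => ?_) x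
  exact ((hd x).sub ((Ao_deriv ha hu x).const_mul (a : ℂ))).congr_deriv (by ring)

lemma Rop_d {κ : ℝ} (hκ : 0 < κ) {u u1 : ℝ → ℂ} (hu : BC u) (hu1 : BC u1)
    (hd : ∀ x, HasDerivAt u (u1 x) x) (x : ℝ) : Rop κ u1 x = Dop κ u x := by
  have ha : 0 < 2 * κ := by linarith
  have hk : (κ : ℂ) ≠ 0 := by exact_mod_cast hκ.ne'
  rw [Rop_eq hκ hu1, Bo_d ha hu hu1 hd, Ao_d ha hu hu1 hd, Dop]
  push_cast; field_simp; ring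

lemma Rop_d2 {κ : ℝ} (hκ : 0 < κ) {u u1 u2 : ℝ → ℂ} (hu : BC u) (hu1 : BC u1) (hu2 : BC u2)
    (hd : ∀ x, HasDerivAt u (u1 x) x) (hd1 : ∀ x, HasDerivAt u1 (u2 x) x) (x : ℝ) :
    Rop κ u2 x = 4 * κ ^ 2 * Rop κ u x - u x := by
  have ha : 0 < 2 * κ := by linarith
  have hk : (κ : ℂ) ≠ 0 := by exact_mod_cast hκ.ne'
  rw [Rop_d hκ hu1 hu2 hd1, Dop, Bo_d ha hu hu1 hd, Ao_d ha hu hu1 hd, Rop_eq hκ hu]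
  push_cast; field_simp; ring

lemma itd2 {u u1 u2 : ℝ → ℂ} (hd : ∀ x, HasDerivAt u (u1 x) x)
    (hd1 : ∀ x, HasDerivAt u1 (u2 x) x) : iteratedDeriv 2 u = u2 := by
  rw [iteratedDeriv_succ, iteratedDeriv_one, funext fun x => (hd x).deriv]
  exact funext fun x => (hd1 x).deriv

lemma itd4 {u : ℝ → ℂ} : iteratedDeriv 4 u = iteratedDeriv 2 (iteratedDeriv 2 u) := by
  simp only [iteratedDeriv_succ, iteratedDeriv_zero]

/-- the key combination -/
lemma key {κ : ℝ} (hκ : 0 < κ) {f h : ℝ → ℂ} (hf : BC f) (hh : BC h) (x : ℝ) :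
    8 * κ ^ 2 * (Rop κ f x * Rop κ h x + Rop κ (fun y => Dop κ f y * Dop κ h y) x
      + 8 * κ ^ 2 * Rop κ (fun y => Rop κ f y * Rop κ h y) x) =
    Ao (2 * κ) f x * Bo (2 * κ) h x + Bo (2 * κ) f x * Ao (2 * κ) h x
     + (Bo (2 * κ) f x * Bo (2 * κ) h x
        + 2 * κ * Bo (2 * κ) (fun y => Bo (2 * κ) f y * Bo (2 * κ) h y) x)
     + (Ao (2 * κ) f x * Ao (2 * κ) h x
        + 2 * κ * Ao (2 * κ) (fun y => Ao (2 * κ) f y * Ao (2 * κ) h y) x) := by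
  have ha : 0 < 2 * κ := by linarith
  have hk : (κ : ℂ) ≠ 0 := by exact_mod_cast hκ.ne'
  have Af := Ao_bdd ha hf
  have Ah := Ao_bdd ha hh
  have Bf := Bo_bdd ha hf
  have Bh := Bo_bdd ha hh
  have hM1 : BC (fun y => Dop κ f y * Dop κ h y) := (Dop_bdd hκ hf).mul (Dop_bdd hκ hh)
  have hM2 : BC (fun y => Rop κ f y * Rop κ h y) := (Rop_bdd hκ hf).mul (Rop_bdd hκ hh)
  have hM : BC (fun y => Dop κ f y * Dop κ h y + 8 * κ ^ 2 * (Rop κ f y * Rop κ h y)) :=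
    hM1.add ((BC.const _).mul hM2)
  have hB1 := Bo_unique ha (u := fun x => Bo (2 * κ) (fun y => Dop κ f y * Dop κ h y) x
      + 8 * κ ^ 2 * Bo (2 * κ) (fun y => Rop κ f y * Rop κ h y) x)
    ((Bo_bdd ha hM1).add ((BC.const _).mul (Bo_bdd ha hM2))) hM (fun x =>
      ((Bo_deriv ha hM1 x).add ((Bo_deriv ha hM2 x).const_mul (8 * (κ:ℂ) ^ 2))).congr_deriv
        (by ring)) x
  have hA1 := Ao_unique ha (u := fun x => Ao (2 * κ) (fun y => Dop κ f y * Dop κ h y) x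
      + 8 * κ ^ 2 * Ao (2 * κ) (fun y => Rop κ f y * Rop κ h y) x)
    ((Ao_bdd ha hM1).add ((BC.const _).mul (Ao_bdd ha hM2))) hM (fun x =>
      ((Ao_deriv ha hM1 x).add ((Ao_deriv ha hM2 x).const_mul (8 * (κ:ℂ) ^ 2))).congr_deriv
        (by ring)) x
  have dT : ∀ x, HasDerivAt (fun x => (Ao (2 * κ) f x + Bo (2 * κ) f x) *
      (Ao (2 * κ) h x + Bo (2 * κ) h x)) (4 * κ * (Bo (2 * κ) f x * Bo (2 * κ) h x
        - Ao (2 * κ) f x * Ao (2 * κ) h x)) x := fun x =>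
    (((Ao_deriv ha hf x).add (Bo_deriv ha hf x)).mul
      ((Ao_deriv ha hh x).add (Bo_deriv ha hh x))).congr_deriv
        (by simp only [Pi.add_apply]; push_cast; ring)
  have hB2 := Bo_unique ha (u := fun x => (8 * (κ:ℂ))⁻¹ * ((Ao (2 * κ) f x + Bo (2 * κ) f x) *
      (Ao (2 * κ) h x + Bo (2 * κ) h x))
      + Bo (2 * κ) (fun y => Bo (2 * κ) f y * Bo (2 * κ) h y) x)
    (((BC.const _).mul ((Af.add Bf).mul (Ah.add Bh))).add (Bo_bdd ha (Bf.mul Bh))) hM (fun x =>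
      (((dT x).const_mul ((8 * (κ:ℂ))⁻¹)).add (Bo_deriv ha (Bf.mul Bh) x)).congr_deriv (by
        simp only [Rop_eq hκ hf, Rop_eq hκ hh, Dop]
        push_cast; field_simp; ring)) x
  have hA2 := Ao_unique ha (u := fun x => (8 * (κ:ℂ))⁻¹ * ((Ao (2 * κ) f x + Bo (2 * κ) f x) *
      (Ao (2 * κ) h x + Bo (2 * κ) h x))
      + Ao (2 * κ) (fun y => Ao (2 * κ) f y * Ao (2 * κ) h y) x)
    (((BC.const _).mul ((Af.add Bf).mul (Ah.add Bh))).add (Ao_bdd ha (Af.mul Ah))) hM (fun x =>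
      (((dT x).const_mul ((8 * (κ:ℂ))⁻¹)).add (Ao_deriv ha (Af.mul Ah) x)).congr_deriv (by
        simp only [Rop_eq hκ hf, Rop_eq hκ hh, Dop]
        push_cast; field_simp; ring)) x
  have eB := hB1.symm.trans hB2
  have eA := hA1.symm.trans hA2
  rw [Rop_eq hκ hM1, Rop_eq hκ hM2, Rop_eq hκ hf, Rop_eq hκ hh]
  have e : ∀ p q r s t : ℂ, 8 * (κ:ℂ) ^ 2 * (p + (4 * (κ:ℂ))⁻¹ * (q + r)
      + 8 * κ ^ 2 * ((4 * (κ:ℂ))⁻¹ * (s + t))) =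
      8 * κ ^ 2 * p + 2 * κ * ((q + 8 * κ ^ 2 * s) + (r + 8 * κ ^ 2 * t)) := by
    intros; field_simp; ring
  rw [e, eA, eB]
  field_simp
  ring

lemma N_bdd (h : ℝ → ℂ) (hh : BC h) (hi : Integrable h) (x : ℝ) :
    BC (fun y => ∫ z in x..y, h z) := by
  refine ⟨intervalIntegral.continuous_primitive (fun a b => hh.1.intervalIntegrable a b) x,
    ∫ z, ‖h z‖, fun y => ?_⟩
  refine intervalIntegral.norm_integral_le_integral_norm_uIoc.trans ?_
  exact setIntegral_le_integral hi.norm (Filter.Eventually.of_forall fun _ => norm_nonneg _)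

/-- the kernel -/
noncomputable def K (κ x y z : ℝ) : ℂ := E κ |x - y| * E κ |y - z| * E κ |z - x|

lemma K_cont (κ x y : ℝ) : Continuous (K κ x y) := by
  unfold K E; fun_prop

lemma E_le {κ s : ℝ} (hκ : 0 < κ) : ‖E κ |s|‖ ≤ 1 := by
  rw [E_norm]; apply Real.exp_le_one_iff.2
  have := abs_nonneg s
  nlinarith [mul_nonneg hκ.le this]

lemma K_le {κ : ℝ} (hκ : 0 < κ) (x y z : ℝ) : ‖K κ x y z‖ ≤ 1 := by
  unfold K
  rw [norm_mul, norm_mul]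
  exact mul_le_one₀ (mul_le_one₀ (E_le hκ) (norm_nonneg _) (E_le hκ)) (norm_nonneg _) (E_le hκ)

lemma K_neg (κ x y z : ℝ) : K κ (-x) y z = K κ x (-y) (-z) := by
  unfold K
  rw [← abs_neg (-x - y), ← abs_neg (y - z), ← abs_neg (z - -x)]
  congr 3
  · congr 2; ring
  · congr 2; ring
  · congr 1; ring

lemma inner_eq {κ : ℝ} (hκ : 0 < κ) {h : ℝ → ℂ} (hh : BC h) (hi : Integrable h) {x y : ℝ}
    (hxy : x < y) : ∫ z, K κ x y z * h z =
      E (2 * κ) (y - x) * (Ao (2 * κ) h x + (∫ z in x..y, h z) + Bo (2 * κ) h y) := by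
  have hint : Integrable (fun z => K κ x y z * h z) :=
    hi.bdd_mul (K_cont κ x y).aestronglyMeasurable
      (Filter.Eventually.of_forall fun z => K_le hκ x y z)
  have hE : ∀ p q r s : ℝ, p + q + r = 2 * s → E κ p * E κ q * E κ r = E (2 * κ) s := by
    intro p q r s hs
    rw [← E_add, ← E_add, hs]; unfold E; congr 3; ring
  rw [← intervalIntegral.integral_Iic_add_Ioi (b := x) hint.integrableOn hint.integrableOn,
    ← intervalIntegral.integral_interval_add_Ioi (a := x) (b := y) hint.integrableOn
      hint.integrableOn, mul_add, mul_add, add_assoc]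
  congr 1
  · rw [Ao_eq, ← integral_const_mul]
    refine setIntegral_congr_fun measurableSet_Iic fun z hz => ?_
    have hz : z ≤ x := hz
    rw [← mul_assoc, ← E_add]; congr 1
    apply hE
    rw [abs_of_nonpos (by linarith), abs_of_nonneg (by linarith), abs_of_nonpos (by linarith)]
    ring
  congr 1
  · rw [← intervalIntegral.integral_const_mul]
    refine intervalIntegral.integral_congr fun z hz => ?_
    rw [uIcc_of_le hxy.le] at hz
    obtain ⟨h1, h2⟩ := hz
    congr 1
    apply hE
    rw [abs_of_nonpos (by linarith), abs_of_nonneg (by linarith), abs_of_nonneg (by linarith)]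
    ring
  · rw [Bo, ← integral_const_mul]
    refine setIntegral_congr_fun measurableSet_Ioi fun z hz => ?_
    have hz : y < z := hz
    rw [← mul_assoc, ← E_add]; congr 1
    apply hE
    rw [abs_of_nonpos (by linarith), abs_of_nonpos (by linarith), abs_of_nonneg (by linarith)]
    ring

lemma half {κ : ℝ} (hκ : 0 < κ) {f h : ℝ → ℂ} (hf : BC f) (hh : BC h) (hi : Integrable h)
    (x : ℝ) : ∫ y in Ioi x, f y * ∫ z, K κ x y z * h z =
      Bo (2 * κ) f x * Ao (2 * κ) h x + (Bo (2 * κ) f x * Bo (2 * κ) h x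
        + 2 * κ * Bo (2 * κ) (fun y => Bo (2 * κ) f y * Bo (2 * κ) h y) x) := by
  have ha : 0 < 2 * κ := by linarith
  have Bf := Bo_bdd ha hf
  have Bh := Bo_bdd ha hh
  have hN := N_bdd h hh hi x
  have e : ∫ y in Ioi x, f y * ∫ z, K κ x y z * h z =
      Bo (2 * κ) (fun y => f y * (Ao (2 * κ) h x + (∫ z in x..y, h z) + Bo (2 * κ) h y)) x := by
    refine setIntegral_congr_fun measurableSet_Ioi fun y hy => ?_
    simp only
    rw [inner_eq hκ hh hi hy]; ring
  rw [e, Bo_unique ha (u := fun y => Bo (2 * κ) f y * (Ao (2 * κ) h x + (∫ z in x..y, h z))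
      + (Bo (2 * κ) f y * Bo (2 * κ) h y
        + 2 * κ * Bo (2 * κ) (fun y => Bo (2 * κ) f y * Bo (2 * κ) h y) y))]
  · simp
  · exact (Bf.mul ((BC.const _).add hN)).add ((Bf.mul Bh).add ((BC.const _).mul
      (Bo_bdd ha (Bf.mul Bh))))
  · exact hf.mul (((BC.const _).add hN).add Bh)
  · intro y
    have dN := intervalIntegral.integral_hasDerivAt_right (hh.1.intervalIntegrable x y)
      (hh.1.stronglyMeasurableAtFilter _ _) hh.1.continuousAt
    refine (((Bo_deriv ha hf y).mul (dN.const_add (Ao (2 * κ) h x))).add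
      (((Bo_deriv ha hf y).mul (Bo_deriv ha hh y)).add
        ((Bo_deriv ha (Bf.mul Bh) y).const_mul (2 * (κ:ℂ))))).congr_deriv ?_
    push_cast; ring

lemma half' {κ : ℝ} (hκ : 0 < κ) {f h : ℝ → ℂ} (hf : BC f) (hh : BC h) (hi : Integrable h)
    (x : ℝ) : ∫ y in Iic x, f y * ∫ z, K κ x y z * h z =
      Ao (2 * κ) f x * Bo (2 * κ) h x + (Ao (2 * κ) f x * Ao (2 * κ) h x
        + 2 * κ * Ao (2 * κ) (fun y => Ao (2 * κ) f y * Ao (2 * κ) h y) x) := by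
  have := half hκ hf.refl hh.refl hi.comp_neg (-x)
  have e1 := integral_comp_neg_Ioi (-x) (fun y => f y * ∫ z, K κ x y z * h z)
  rw [neg_neg] at e1
  rw [← e1]
  have e2 : ∀ y, ∫ z, K κ x (-y) z * h z = ∫ z, K κ (-x) y z * h (-z) := by
    intro y
    rw [← integral_neg_eq_self]
    simp only [K_neg]
  simp only [e2]
  rw [this]
  simp only [Ao, neg_neg]

lemma lhs_eq {κ : ℝ} (hκ : 0 < κ) (f h : SchwartzMap ℝ ℂ) (x : ℝ) :
    ∫ p : ℝ × ℝ, K κ x p.1 p.2 * f p.1 * h p.2 =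
    Ao (2 * κ) f x * Bo (2 * κ) h x + Bo (2 * κ) f x * Ao (2 * κ) h x
     + (Bo (2 * κ) f x * Bo (2 * κ) h x
        + 2 * κ * Bo (2 * κ) (fun y => Bo (2 * κ) f y * Bo (2 * κ) h y) x)
     + (Ao (2 * κ) f x * Ao (2 * κ) h x
        + 2 * κ * Ao (2 * κ) (fun y => Ao (2 * κ) f y * Ao (2 * κ) h y) x) := by
  have hi : Integrable (fun p : ℝ × ℝ => K κ x p.1 p.2 * (f p.1 * h p.2))
      ((volume : Measure ℝ).prod volume) := by
    refine (f.integrable.mul_prod h.integrable).bdd_mul (c := 1) ?_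
      (Filter.Eventually.of_forall fun z => K_le hκ x _ _)
    apply Continuous.aestronglyMeasurable
    unfold K E; fun_prop
  have e : ∀ y, ∫ z, K κ x y z * (f y * h z) = f y * ∫ z, K κ x y z * h z := by
    intro y
    rw [← integral_const_mul]; congr 1; ext z; ring
  have hi2 := hi.integral_prod_left
  simp only [e] at hi2
  simp only [mul_assoc]
  rw [Measure.volume_eq_prod, integral_prod _ hi]
  simp only [e]
  rw [← intervalIntegral.integral_Iic_add_Ioi (b := x) hi2.integrableOn hi2.integrableOn,
    half hκ (BC.schwartz f) (BC.schwartz h) h.integrable,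
    half' hκ (BC.schwartz f) (BC.schwartz h) h.integrable]
  ring

end QI


open QI

/-- The quadratic operator identity
`16κ⁵⟨δₓ, R₀ f R₀ h R₀ δₓ⟩ = 3fh − 3[Rf″][Rh″] + 4κ²(−5 + R∂²)([Rf′][Rh′])
+ 4κ²(5∂² + 2R∂⁴)([Rf][Rh])` with `R = R₀(2κ)`, written out with kernels. -/
theorem stmt15 (κ : ℝ) (hκ : 0 < κ) (f h : SchwartzMap ℝ ℂ) (x : ℝ) :
    (16 * (κ : ℂ) ^ 5) *
        ∫ p : ℝ × ℝ,
          ((((2 * κ)⁻¹ * Real.exp (-κ * |x - p.1|)) *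
            ((2 * κ)⁻¹ * Real.exp (-κ * |p.1 - p.2|)) *
            ((2 * κ)⁻¹ * Real.exp (-κ * |p.2 - x|)) : ℝ) : ℂ) * f p.1 * h p.2 =
      3 * f x * h x -
        3 * Rop κ (iteratedDeriv 2 ⇑f) x * Rop κ (iteratedDeriv 2 ⇑h) x -
        20 * (κ : ℂ) ^ 2 * Rop κ (deriv ⇑f) x * Rop κ (deriv ⇑h) x +
        4 * (κ : ℂ) ^ 2 *
          Rop κ (iteratedDeriv 2 (fun y => Rop κ (deriv ⇑f) y * Rop κ (deriv ⇑h) y)) x +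
        20 * (κ : ℂ) ^ 2 * iteratedDeriv 2 (fun y => Rop κ (⇑f) y * Rop κ (⇑h) y) x +
        8 * (κ : ℂ) ^ 2 * Rop κ (iteratedDeriv 4 (fun y => Rop κ (⇑f) y * Rop κ (⇑h) y)) x := by
  have hk : (κ : ℂ) ≠ 0 := by exact_mod_cast hκ.ne'
  -- derivatives of the data
  have df : ∀ g : SchwartzMap ℝ ℂ, ∃ g1 g2 : SchwartzMap ℝ ℂ, (∀ y, HasDerivAt g (g1 y) y) ∧
      (∀ y, HasDerivAt g1 (g2 y) y) := by
    intro g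
    refine ⟨SchwartzMap.derivCLM ℝ ℂ g, SchwartzMap.derivCLM ℝ ℂ (SchwartzMap.derivCLM ℝ ℂ g),
      fun y => ?_, fun y => ?_⟩ <;>
    · rw [SchwartzMap.derivCLM_apply]
      exact (SchwartzMap.differentiable _ y).hasDerivAt
  obtain ⟨f1, f2, hf1, hf2⟩ := df f
  obtain ⟨h1, h2, hh1, hh2⟩ := df h
  have bf := BC.schwartz f
  have bh := BC.schwartz h
  have bf1 := BC.schwartz f1
  have bh1 := BC.schwartz h1
  have bf2 := BC.schwartz f2
  have bh2 := BC.schwartz h2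
  have RF := Rop_bdd hκ bf
  have RH := Rop_bdd hκ bh
  have DF := Dop_bdd hκ bf
  have DH := Dop_bdd hκ bh
  have rF := Rop_deriv hκ bf
  have rH := Rop_deriv hκ bh
  have dF := Dop_deriv hκ bf
  have dH := Dop_deriv hκ bh
  have c := BC.const (4 * (κ:ℂ) ^ 2)
  have F2 := (c.mul RF).sub bf
  have H2 := (c.mul RH).sub bh
  have F3 := (c.mul DF).sub bf1
  have H3 := (c.mul DH).sub bh1
  have F4 := (c.mul F2).sub bf2
  have H4 := (c.mul H2).sub bh2
  have d2F : ∀ y, HasDerivAt (fun y => 4 * (κ:ℂ) ^ 2 * Rop κ f y - f y)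
    (4 * (κ:ℂ) ^ 2 * Dop κ f y - f1 y) y := fun y => ((rF y).const_mul _).sub (hf1 y)
  have d2H : ∀ y, HasDerivAt (fun y => 4 * (κ:ℂ) ^ 2 * Rop κ h y - h y)
    (4 * (κ:ℂ) ^ 2 * Dop κ h y - h1 y) y := fun y => ((rH y).const_mul _).sub (hh1 y)
  have d3F : ∀ y, HasDerivAt (fun y => 4 * (κ:ℂ) ^ 2 * Dop κ f y - f1 y)
    (4 * (κ:ℂ) ^ 2 * (4 * (κ:ℂ) ^ 2 * Rop κ f y - f y) - f2 y) y :=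
      fun y => ((dF y).const_mul _).sub (hf2 y)
  have d3H : ∀ y, HasDerivAt (fun y => 4 * (κ:ℂ) ^ 2 * Dop κ h y - h1 y)
    (4 * (κ:ℂ) ^ 2 * (4 * (κ:ℂ) ^ 2 * Rop κ h y - h y) - h2 y) y :=
      fun y => ((dH y).const_mul _).sub (hh2 y)
  -- products
  have g1 := fun y => (rF y).mul (rH y)
  have g2 := fun y => ((dF y).mul (rH y)).add ((rF y).mul (dH y))
  have g2' := fun y => (g2 y).congr_deriv (g' := ((4 * (κ:ℂ) ^ 2 * Rop κ f y - f y) * Rop κ h y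
      + Dop κ f y * Dop κ h y) + (Dop κ f y * Dop κ h y
      + Rop κ f y * (4 * (κ:ℂ) ^ 2 * Rop κ h y - h y))) (by ring)
  have G2 := ((F2.mul RH).add (DF.mul DH)).add ((DF.mul DH).add (RF.mul H2))
  have g3 := fun y => (((d2F y).mul (rH y)).add ((dF y).mul (dH y))).add
    (((dF y).mul (dH y)).add ((rF y).mul (d2H y)))
  have G3 := (((F3.mul RH).add (F2.mul DH)).add ((F2.mul DH).add (DF.mul H2))).add
    (((F2.mul DH).add (DF.mul H2)).add ((DF.mul H2).add (RF.mul H3)))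
  have g4 := fun y => ((((d3F y).mul (rH y)).add ((d2F y).mul (dH y))).add
    (((d2F y).mul (dH y)).add ((dF y).mul (d2H y)))).add
    ((((d2F y).mul (dH y)).add ((dF y).mul (d2H y))).add
    (((dF y).mul (d2H y)).add ((rF y).mul (d3H y))))
  have G4 := ((((F4.mul RH).add (F3.mul DH)).add ((F3.mul DH).add (F2.mul H2))).add
    (((F3.mul DH).add (F2.mul H2)).add ((F2.mul H2).add (DF.mul H3)))).add
    ((((F3.mul DH).add (F2.mul H2)).add ((F2.mul H2).add (DF.mul H3))).add
    (((F2.mul H2).add (DF.mul H3)).add ((DF.mul H3).add (RF.mul H4))))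
  have k1 := fun y => (dF y).mul (dH y)
  have k2 := fun y => ((d2F y).mul (dH y)).add ((dF y).mul (d2H y))
  have K1 := (F2.mul DH).add (DF.mul H2)
  have K2 := ((F3.mul DH).add (F2.mul H2)).add ((F2.mul H2).add (DF.mul H3))
  have r1f : Rop κ (deriv f) = Dop κ f := by
    rw [funext fun y => (hf1 y).deriv]; exact funext (Rop_d hκ bf bf1 hf1)
  have r1h : Rop κ (deriv h) = Dop κ h := by
    rw [funext fun y => (hh1 y).deriv]; exact funext (Rop_d hκ bh bh1 hh1)
  rw [itd2 hf1 hf2, itd2 hh1 hh2, Rop_d2 hκ bf bf1 bf2 hf1 hf2, Rop_d2 hκ bh bh1 bh2 hh1 hh2,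
    r1f, r1h, itd4]
  have i2 : iteratedDeriv 2 (fun y => Rop κ (⇑f) y * Rop κ (⇑h) y) = _ := itd2 g1 g2
  have iK : iteratedDeriv 2 (fun y => Dop κ (⇑f) y * Dop κ (⇑h) y) = _ := itd2 k1 k2
  have i4 : iteratedDeriv 2 (fun y => ((4 * (κ:ℂ) ^ 2 * Rop κ f y - f y) * Rop κ h y
      + Dop κ f y * Dop κ h y) + (Dop κ f y * Dop κ h y
      + Rop κ f y * (4 * (κ:ℂ) ^ 2 * Rop κ h y - h y))) = _ := itd2 g3 g4
  rw [i2, iK, i4]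
  have A1 := Rop_d2 hκ (DF.mul DH) K1 K2 k1 k2 x
  have A2 := Rop_d2 hκ G2 G3 G4 g3 g4 x
  have A3 := Rop_d2 hκ (RF.mul RH) ((DF.mul RH).add (RF.mul DH)) G2 g1 g2 x
  have key := key hκ bf bh x
  have lhs := lhs_eq hκ f h x
  have hK : ∀ p : ℝ × ℝ, ((((2 * κ)⁻¹ * Real.exp (-κ * |x - p.1|)) *
            ((2 * κ)⁻¹ * Real.exp (-κ * |p.1 - p.2|)) *
            ((2 * κ)⁻¹ * Real.exp (-κ * |p.2 - x|)) : ℝ) : ℂ) * f p.1 * h p.2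
      = (8 * (κ:ℂ) ^ 3)⁻¹ * (K κ x p.1 p.2 * f p.1 * h p.2) := by
    intro p
    unfold K E
    simp only [neg_mul]
    push_cast
    field_simp
    ring
  simp only [hK]
  rw [integral_const_mul, lhs, ← key]
  rw [A1, A2, A3]
  field_simp
  ring
end

section
/- There exists a constant C > 0 such that for every κ ≥ 1, every C² function f : ℝ → ℝ with f, f′, f″ bounded, and every Schwartz function h : ℝ → ℂ, the function x ↦ 16κ⁵ ∬_{ℝ×ℝ} (2κ)^{-1}e^{-κ|x−y|} f(y) (2κ)^{-1}e^{-κ|y−z|} h(z) (2κ)^{-1}e^{-κ|z−x|} dy dz − 3 f(x)h(x) has L²(ℝ) norm at most C κ^{-2} (sup|f| + sup|f′| + sup|f″|) (‖h‖_{L²} + ‖h″‖_{L²}); that is, ‖16κ⁵⟨δₓ, R₀ f R₀ h R₀ δₓ⟩ − 3fh‖_{L²} ≲ κ^{-2} ‖f‖_{W^{2,∞}} ‖h‖_{H²} uniformly for κ ≥ 1. -/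
open MeasureTheory

lemma s16_int_abs {a : ℝ} (ha : 0 < a) : ∫ x : ℝ, Real.exp (-a * |x|) = 2 / a := by
  rw [integral_comp_abs (f := fun x => Real.exp (-a * x)), integral_exp_mul_Ioi (by linarith)]
  simp
  field_simp

lemma s16_integrable_abs {a : ℝ} (ha : 0 < a) : Integrable (fun x : ℝ => Real.exp (-a * |x|)) := by
  apply Integrable.of_integral_ne_zero
  rw [s16_int_abs ha]; positivity

lemma s16_integrable2 {a : ℝ} (ha : 0 < a) :
    Integrable (fun p : ℝ × ℝ => Real.exp (-a * (|p.1| + |p.2|))) := by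
  have := (s16_integrable_abs ha).mul_prod (s16_integrable_abs ha)
  refine this.congr (Filter.Eventually.of_forall fun p => ?_)
  simp only [← Real.exp_add]; congr 1; ring

lemma s16_int2 {a : ℝ} (ha : 0 < a) :
    ∫ p : ℝ × ℝ, Real.exp (-a * (|p.1| + |p.2|)) = (2 / a) ^ 2 := by
  have := integral_prod_mul (μ := volume) (ν := volume) (L := ℝ)
    (fun x : ℝ => Real.exp (-a * |x|)) (fun x : ℝ => Real.exp (-a * |x|))
  rw [s16_int_abs ha, ← sq] at this
  rw [← this]
  refine integral_congr_ae (Filter.Eventually.of_forall fun p => ?_)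
  simp only [← Real.exp_add]; congr 1; ring

/-- the kernel -/
noncomputable def s16K (κ : ℝ) (p : ℝ × ℝ) : ℝ :=
  Real.exp (-κ * (|p.1| + |p.1 - p.2| + |p.2|))

lemma s16K_cont (κ : ℝ) : Continuous (s16K κ) := by
  unfold s16K; fun_prop

lemma s16K_le {κ : ℝ} (hκ : 0 < κ) (p : ℝ × ℝ) : s16K κ p ≤ Real.exp (-κ * (|p.1| + |p.2|)) := by
  unfold s16K
  apply Real.exp_le_exp.2
  nlinarith [abs_nonneg (p.1 - p.2)]

lemma s16K_nonneg (κ : ℝ) (p : ℝ × ℝ) : 0 ≤ s16K κ p := (Real.exp_pos _).le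

lemma s16K_integrable {κ : ℝ} (hκ : 0 < κ) : Integrable (s16K κ) := by
  refine (s16_integrable2 hκ).mono' (s16K_cont κ).aestronglyMeasurable
    (Filter.Eventually.of_forall fun p => ?_)
  rw [Real.norm_of_nonneg (s16K_nonneg _ _)]
  exact s16K_le hκ p

lemma s16_inner_integrable {κ : ℝ} (hκ : 0 < κ) (v : ℝ) :
    Integrable (fun u : ℝ => Real.exp (-κ * (|u| + |u - v|))) := by
  refine (s16_integrable_abs hκ).mono' (Continuous.aestronglyMeasurable (by fun_prop))
    (Filter.Eventually.of_forall fun p => ?_)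
  rw [Real.norm_of_nonneg (Real.exp_pos _).le]
  apply Real.exp_le_exp.2
  nlinarith [abs_nonneg (p - v)]

lemma s16_inner_pos {κ : ℝ} (hκ : 0 < κ) {v : ℝ} (hv : 0 ≤ v) :
    ∫ u : ℝ, Real.exp (-κ * (|u| + |u - v|)) = (v + 1 / κ) * Real.exp (-κ * v) := by
  have hi := s16_inner_integrable hκ v
  rw [← intervalIntegral.integral_Iic_add_Ioi (b := 0) hi.integrableOn hi.integrableOn]
  have h1 : ∫ u in Set.Iic (0:ℝ), Real.exp (-κ * (|u| + |u - v|))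
      = Real.exp (-κ * v) * (1 / (2 * κ)) := by
    have : ∫ u in Set.Iic (0:ℝ), Real.exp (-κ * (|u| + |u - v|))
      = ∫ u in Set.Iic (0:ℝ), Real.exp (-κ * v) * Real.exp ((2 * κ) * u) := by
      refine setIntegral_congr_fun measurableSet_Iic fun u hu => ?_
      have hu' : u ≤ 0 := hu
      rw [abs_of_nonpos hu', abs_of_nonpos (by linarith), ← Real.exp_add]
      congr 1; ring
    rw [this, integral_const_mul, integral_exp_mul_Iic (by positivity)]
    simp
  have h2 : ∫ u in Set.Ioi v, Real.exp (-κ * (|u| + |u - v|))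
      = Real.exp (-κ * v) * (1 / (2 * κ)) := by
    have : ∫ u in Set.Ioi v, Real.exp (-κ * (|u| + |u - v|))
      = ∫ u in Set.Ioi v, Real.exp (κ * v) * Real.exp ((-(2 * κ)) * u) := by
      refine setIntegral_congr_fun measurableSet_Ioi fun u hu => ?_
      have hu' : v < u := hu
      rw [abs_of_nonneg (by linarith), abs_of_nonneg (by linarith), ← Real.exp_add]
      congr 1; ring
    rw [this, integral_const_mul, integral_exp_mul_Ioi (by linarith), neg_div_neg_eq, ← mul_div_assoc,
      ← Real.exp_add]
    rw [mul_one_div]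
    congr 2; ring
  have h3 : ∫ u in Set.Ioc 0 v, Real.exp (-κ * (|u| + |u - v|))
      = v * Real.exp (-κ * v) := by
    have : ∫ u in Set.Ioc 0 v, Real.exp (-κ * (|u| + |u - v|))
      = ∫ u in Set.Ioc 0 v, Real.exp (-κ * v) := by
      refine setIntegral_congr_fun measurableSet_Ioc fun u hu => ?_
      rw [abs_of_nonneg hu.1.le, abs_of_nonpos (by linarith [hu.2])]
      congr 1; ring
    rw [this, setIntegral_const]
    simp [hv]
  have h4 : ∫ u in Set.Ioi 0, Real.exp (-κ * (|u| + |u - v|))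
      = v * Real.exp (-κ * v) + Real.exp (-κ * v) * (1 / (2 * κ)) := by
    rw [← Set.Ioc_union_Ioi_eq_Ioi hv, setIntegral_union (Set.Ioc_disjoint_Ioi le_rfl)
      measurableSet_Ioi hi.integrableOn hi.integrableOn, h3, h2]
  rw [h1, h4]
  field_simp
  ring

lemma s16_inner {κ : ℝ} (hκ : 0 < κ) (v : ℝ) :
    ∫ u : ℝ, Real.exp (-κ * (|u| + |u - v|)) = (|v| + 1 / κ) * Real.exp (-κ * |v|) := by
  rcases le_total 0 v with hv | hv
  · rw [abs_of_nonneg hv, s16_inner_pos hκ hv]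
  · rw [abs_of_nonpos hv, ← s16_inner_pos hκ (by linarith : 0 ≤ -v), ← integral_neg_eq_self]
    congr 1; ext u
    rw [abs_neg, ← abs_neg (-u - v)]
    congr 5; ring

lemma s16K_int {κ : ℝ} (hκ : 0 < κ) : ∫ p : ℝ × ℝ, s16K κ p = 3 / (2 * κ ^ 2) := by
  have e : ∫ p : ℝ × ℝ, s16K κ p = ∫ v : ℝ, ∫ u : ℝ, s16K κ (u, v) :=
    integral_prod_symm _ (s16K_integrable hκ)
  have e2 : ∀ v : ℝ, ∫ u : ℝ, s16K κ (u, v) = (|v| + 1 / κ) * Real.exp (-(2 * κ) * |v|) := by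
    intro v
    have : ∀ u, s16K κ (u, v) = Real.exp (-κ * (|u| + |u - v|)) * Real.exp (-κ * |v|) := by
      intro u; unfold s16K; rw [← Real.exp_add]; congr 1; ring
    simp only [this]
    rw [integral_mul_const, s16_inner hκ, mul_assoc, ← Real.exp_add]
    congr 2; ring
  simp only [e, e2]
  rw [integral_comp_abs (f := fun v => (v + 1 / κ) * Real.exp (-(2 * κ) * v))]
  have h1 : ∫ v in Set.Ioi (0:ℝ), v * Real.exp (-(2 * κ) * v) = 1 / (4 * κ ^ 2) := by
    have := Real.integral_rpow_mul_exp_neg_mul_Ioi (a := 2) (r := 2 * κ) (by norm_num) (by positivity)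
    rw [Real.Gamma_two] at this
    norm_num at this
    simp only [neg_mul]
    rw [this]; field_simp; norm_num
  have h2 : ∫ v in Set.Ioi (0:ℝ), (1 / κ) * Real.exp (-(2 * κ) * v) = 1 / (2 * κ ^ 2) := by
    rw [integral_const_mul, integral_exp_mul_Ioi (by linarith)]
    simp; field_simp
  simp only [add_mul]
  rw [integral_add, h1, h2]
  · field_simp; norm_num
  · apply Integrable.of_integral_ne_zero; rw [h1]; positivity
  · apply Integrable.of_integral_ne_zero; rw [h2]; positivity

lemma s16_pow_exp {κ : ℝ} (hκ : 0 < κ) {r : ℝ} (hr : 0 ≤ r) (n : ℕ) :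
    Real.exp (-κ * r) * r ^ n ≤ n.factorial * (2 / κ) ^ n * Real.exp (-(κ / 2) * r) := by
  have h := Real.pow_div_factorial_le_exp (κ / 2 * r) (by positivity) n
  rw [div_le_iff₀ (by positivity)] at h
  have e : Real.exp (-κ * r) = Real.exp (-(κ / 2) * r) * Real.exp (-(κ / 2) * r) := by
    rw [← Real.exp_add]; congr 1; ring
  have e2 : Real.exp (-(κ / 2) * r) * Real.exp (κ / 2 * r) = 1 := by
    rw [← Real.exp_add]; simp
  have e3 : r ^ n = (2 / κ) ^ n * (κ / 2 * r) ^ n := by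
    rw [← mul_pow]; congr 1; field_simp
  set E := Real.exp (-(κ / 2) * r)
  have hE : 0 < E := Real.exp_pos _
  calc Real.exp (-κ * r) * r ^ n = E * E * ((2 / κ) ^ n * (κ / 2 * r) ^ n) := by rw [e, ← e3]
    _ ≤ E * E * ((2 / κ) ^ n * (Real.exp (κ / 2 * r) * n.factorial)) := by gcongr
    _ = (E * Real.exp (κ / 2 * r)) * (n.factorial * (2 / κ) ^ n * E) := by ring
    _ = _ := by rw [e2, one_mul]

lemma s16K_pow {κ : ℝ} (hκ : 0 < κ) (n : ℕ) (p : ℝ × ℝ) :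
    s16K κ p * (|p.1| + |p.2|) ^ n ≤
      n.factorial * (2 / κ) ^ n * Real.exp (-(κ / 2) * (|p.1| + |p.2|)) := by
  refine le_trans ?_ (s16_pow_exp hκ (by positivity) n)
  exact mul_le_mul_of_nonneg_right (s16K_le hκ p) (by positivity)

lemma s16_cs {α : Type*} [MeasurableSpace α] (μ : Measure α) {w g : α → ENNReal}
    (hw : Measurable w) (hg : Measurable g) :
    (∫⁻ a, w a * g a ∂μ) ^ 2 ≤ (∫⁻ a, w a ∂μ) * ∫⁻ a, w a * g a ^ 2 ∂μ := by
  have h := ENNReal.lintegral_mul_le_Lp_mul_Lq μ (p := 2) (q := 2) Real.HolderConjugate.two_two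
    (f := fun a => w a ^ (1 / 2 : ℝ)) (g := fun a => w a ^ (1 / 2 : ℝ) * g a)
    (hw.pow_const _).aemeasurable ((hw.pow_const _).mul hg).aemeasurable
  have e0 : ∀ x : ENNReal, x ^ (1 / 2 : ℝ) * x ^ (1 / 2 : ℝ) = x := by
    intro x
    rw [← ENNReal.rpow_add_of_nonneg _ _ (by norm_num) (by norm_num)]; norm_num
  have e1 : ∀ a, ((fun a => w a ^ (1 / 2 : ℝ)) * fun a => w a ^ (1 / 2 : ℝ) * g a) a
      = w a * g a := by
    intro a; simp only [Pi.mul_apply]; rw [← mul_assoc, e0]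
  have e2 : ∀ x : ENNReal, (x ^ (1 / 2 : ℝ)) ^ (2 : ℝ) = x := by
    intro x; rw [← ENNReal.rpow_mul]; norm_num
  have e3 : ∀ a, (w a ^ (1 / 2 : ℝ) * g a) ^ (2 : ℝ) = w a * g a ^ 2 := by
    intro a
    rw [ENNReal.mul_rpow_of_nonneg _ _ (by norm_num), e2]
    norm_num
  simp only [e1, e2, e3] at h
  calc (∫⁻ a, w a * g a ∂μ) ^ 2 ≤ ((∫⁻ a, w a ∂μ) ^ (1 / 2 : ℝ) *
      (∫⁻ a, w a * g a ^ 2 ∂μ) ^ (1 / 2 : ℝ)) ^ 2 := by gcongr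
    _ = _ := by
      rw [mul_pow]
      simp only [← ENNReal.rpow_natCast]
      push_cast
      rw [e2, e2]

lemma s16_mink {α : Type*} [MeasurableSpace α] (μ : Measure α) [SFinite μ] {w : α → ENNReal}
    {g : ℝ → α → ENNReal}
    (hw : Measurable w) (hg : Measurable (Function.uncurry g)) :
    ∫⁻ x, (∫⁻ a, w a * g x a ∂μ) ^ 2 ≤
      (∫⁻ a, w a ∂μ) * ∫⁻ a, w a * (∫⁻ x, g x a ^ 2) ∂μ := by
  have hg1 : ∀ x, Measurable (g x) := fun x => hg.comp measurable_prodMk_left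
  have hg2 : ∀ a, Measurable (fun x => g x a) := fun a => hg.comp measurable_prodMk_right
  have hm : Measurable (Function.uncurry fun x a => w a * g x a ^ 2) :=
    (hw.comp measurable_snd).mul (hg.pow_const 2)
  calc ∫⁻ x, (∫⁻ a, w a * g x a ∂μ) ^ 2
      ≤ ∫⁻ x, (∫⁻ a, w a ∂μ) * ∫⁻ a, w a * g x a ^ 2 ∂μ :=
        lintegral_mono fun x => s16_cs μ hw (hg1 x)
    _ = (∫⁻ a, w a ∂μ) * ∫⁻ x, ∫⁻ a, w a * g x a ^ 2 ∂μ := by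
        rw [lintegral_const_mul]
        exact hm.lintegral_prod_right'
    _ = _ := by
        rw [lintegral_lintegral_swap hm.aemeasurable]
        congr 1
        refine lintegral_congr fun a => ?_
        rw [lintegral_const_mul]
        exact (hg2 a).pow_const 2

lemma s16_unit {G : ℝ → ℝ → ℂ} (hG : Continuous (Function.uncurry G)) {F : ℝ → ℂ} {v : ℝ}
    (hF : ∀ x, F x = v * ∫ t in (0:ℝ)..1, G x t) {B : ENNReal}
    (hB : ∀ t ∈ Set.Ioc (0:ℝ) 1, ∫⁻ x, ‖G x t‖ₑ ^ 2 ≤ B) :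
    ∫⁻ x, ‖F x‖ₑ ^ 2 ≤ ENNReal.ofReal (v ^ 2) * B := by
  have hv : ‖(v : ℂ)‖ₑ ^ 2 = ENNReal.ofReal (v ^ 2) := by
    rw [← ofReal_norm, ← ENNReal.ofReal_pow (norm_nonneg _)]; simp
  have h1 : ∀ x, ‖F x‖ₑ ^ 2 ≤ ENNReal.ofReal (v ^ 2) *
      (∫⁻ t in Set.Ioc (0:ℝ) 1, 1 * ‖G x t‖ₑ) ^ 2 := by
    intro x
    rw [hF, enorm_mul, mul_pow, hv, intervalIntegral.integral_of_le zero_le_one]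
    gcongr
    simp only [one_mul]
    exact enorm_integral_le_lintegral_enorm _
  have hm : Measurable (Function.uncurry fun x t => ‖G x t‖ₑ) := hG.measurable.enorm
  calc ∫⁻ x, ‖F x‖ₑ ^ 2 ≤ ∫⁻ x, ENNReal.ofReal (v ^ 2) *
      (∫⁻ t in Set.Ioc (0:ℝ) 1, 1 * ‖G x t‖ₑ) ^ 2 := lintegral_mono h1
    _ = ENNReal.ofReal (v ^ 2) * ∫⁻ x, (∫⁻ t in Set.Ioc (0:ℝ) 1, 1 * ‖G x t‖ₑ) ^ 2 := by
        rw [lintegral_const_mul' _ _ ENNReal.ofReal_ne_top]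
    _ ≤ ENNReal.ofReal (v ^ 2) * ((∫⁻ t in Set.Ioc (0:ℝ) 1, 1) *
          ∫⁻ t in Set.Ioc (0:ℝ) 1, 1 * ∫⁻ x, ‖G x t‖ₑ ^ 2) := by
        gcongr
        exact s16_mink (volume.restrict (Set.Ioc (0:ℝ) 1)) (w := fun _ => 1) measurable_const hm
    _ ≤ ENNReal.ofReal (v ^ 2) * ((∫⁻ t in Set.Ioc (0:ℝ) 1, 1) * ∫⁻ t in Set.Ioc (0:ℝ) 1, B) := by
        gcongr 2
        refine setLIntegral_mono measurable_const fun t ht => ?_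
        rw [one_mul]; exact hB t ht
    _ = _ := by simp

lemma s16_ftc {h h1 : ℝ → ℂ} (hd : ∀ x, HasDerivAt h (h1 x) x) (hc : Continuous h1) (x v : ℝ) :
    h (x + v) - h x = v * ∫ t in (0:ℝ)..1, h1 (x + t * v) := by
  have hd' : ∀ t ∈ Set.uIcc (0:ℝ) 1, HasDerivAt (fun t : ℝ => h (x + t * v)) (v * h1 (x + t * v)) t := by
    intro t _
    have h0 : HasDerivAt (fun t : ℝ => x + t * v) v t := by
      simpa using ((hasDerivAt_id t).mul_const v).const_add x
    have := (hd (x + t * v)).scomp t h0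
    simp only [Complex.real_smul] at this
    exact this
  have := intervalIntegral.integral_eq_sub_of_hasDerivAt hd'
    (Continuous.intervalIntegrable (by fun_prop) _ _)
  rw [intervalIntegral.integral_const_mul] at this
  rw [this]; simp

lemma s16_shift1 {h h1 : ℝ → ℂ} (hd : ∀ x, HasDerivAt h (h1 x) x) (hc : Continuous h1) (v : ℝ) :
    ∫⁻ x, ‖h (x + v) - h x‖ₑ ^ 2 ≤ ENNReal.ofReal (v ^ 2) * ∫⁻ x, ‖h1 x‖ₑ ^ 2 := by
  refine s16_unit (G := fun x t => h1 (x + t * v)) (by unfold Function.uncurry; fun_prop)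
    (fun x => s16_ftc hd hc x v) fun t _ => ?_
  rw [lintegral_add_right_eq_self (fun x => ‖h1 x‖ₑ ^ 2)]

lemma s16_shift2 {h h1 h2 : ℝ → ℂ} (hd : ∀ x, HasDerivAt h (h1 x) x)
    (hd1 : ∀ x, HasDerivAt h1 (h2 x) x) (hc1 : Continuous h1) (hc : Continuous h2) (v : ℝ) :
    ∫⁻ x, ‖h (x + v) - h x - v * h1 x‖ₑ ^ 2 ≤ ENNReal.ofReal (v ^ 4) * ∫⁻ x, ‖h2 x‖ₑ ^ 2 := by
  have := s16_unit (F := fun x => h (x + v) - h x - v * h1 x)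
    (G := fun x t => h1 (x + t * v) - h1 x) (v := v)
    (B := ENNReal.ofReal (v ^ 2) * ∫⁻ x, ‖h2 x‖ₑ ^ 2) (by unfold Function.uncurry; fun_prop)
    (fun x => ?_) fun t ht => ?_
  · refine this.trans (le_of_eq ?_)
    rw [← mul_assoc, ← ENNReal.ofReal_mul (by positivity)]
    congr 2; ring
  · rw [s16_ftc hd hc1, intervalIntegral.integral_sub, mul_sub]
    · simp
    · exact Continuous.intervalIntegrable (by fun_prop) _ _
    · exact Continuous.intervalIntegrable (by fun_prop) _ _
  · refine (s16_shift1 hd1 hc (t * v)).trans ?_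
    refine mul_le_mul_left (ENNReal.ofReal_le_ofReal ?_) _
    rw [mul_pow]
    have : t ^ 2 ≤ 1 := pow_le_one₀ ht.1.le ht.2
    nlinarith [sq_nonneg v]

lemma s16_sq3 (a b c : ℂ) : ‖a + b + c‖ₑ ^ 2 ≤ 3 * (‖a‖ₑ ^ 2 + ‖b‖ₑ ^ 2 + ‖c‖ₑ ^ 2) := by
  simp only [← ofReal_norm]
  rw [← ENNReal.ofReal_pow (norm_nonneg _), ← ENNReal.ofReal_pow (norm_nonneg _),
    ← ENNReal.ofReal_pow (norm_nonneg _), ← ENNReal.ofReal_pow (norm_nonneg _),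
    ← ENNReal.ofReal_add (by positivity) (by positivity),
    ← ENNReal.ofReal_add (by positivity) (by positivity),
    show (3 : ENNReal) = ENNReal.ofReal 3 by simp, ← ENNReal.ofReal_mul (by norm_num)]
  apply ENNReal.ofReal_le_ofReal
  have h := norm_add₃_le (a := a) (b := b) (c := c)
  have h' : ‖a + b + c‖ ^ 2 ≤ (‖a‖ + ‖b‖ + ‖c‖) ^ 2 := by gcongr
  nlinarith [sq_nonneg (‖a‖ - ‖b‖), sq_nonneg (‖a‖ - ‖c‖), sq_nonneg (‖b‖ - ‖c‖)]

lemma s16_lsq3 {a b c : ℝ → ℂ} (ha : Continuous a) (hb : Continuous b) :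
    ∫⁻ x, ‖a x + b x + c x‖ₑ ^ 2 ≤
      3 * ((∫⁻ x, ‖a x‖ₑ ^ 2) + (∫⁻ x, ‖b x‖ₑ ^ 2) + ∫⁻ x, ‖c x‖ₑ ^ 2) := by
  refine (lintegral_mono fun x => s16_sq3 (a x) (b x) (c x)).trans (le_of_eq ?_)
  rw [lintegral_const_mul' _ _ (by simp), lintegral_add_left, lintegral_add_left]
  · exact ha.measurable.enorm.pow_const 2
  · exact (ha.measurable.enorm.pow_const 2).add (hb.measurable.enorm.pow_const 2)

lemma s16_interp {h h1 h2 : ℝ → ℂ} (hd : ∀ x, HasDerivAt h (h1 x) x)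
    (hd1 : ∀ x, HasDerivAt h1 (h2 x) x) (hc0 : Continuous h) (hc1 : Continuous h1)
    (hc : Continuous h2) :
    ∫⁻ x, ‖h1 x‖ₑ ^ 2 ≤ 6 * ((∫⁻ x, ‖h x‖ₑ ^ 2) + ∫⁻ x, ‖h2 x‖ₑ ^ 2) := by
  have e : ∀ x, h1 x = h (x + 1) + (- h x) + (-(h (x + 1) - h x - (1:ℝ) * h1 x)) := by
    intro x; push_cast; ring
  have h3 := s16_shift2 hd hd1 hc1 hc 1
  calc ∫⁻ x, ‖h1 x‖ₑ ^ 2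
      = ∫⁻ x, ‖h (x + 1) + (- h x) + (-(h (x + 1) - h x - (1:ℝ) * h1 x))‖ₑ ^ 2 := by
        simp only [← e]
    _ ≤ _ := s16_lsq3 (by fun_prop) (by fun_prop)
    _ ≤ 3 * ((∫⁻ x, ‖h x‖ₑ ^ 2) + (∫⁻ x, ‖h x‖ₑ ^ 2) + ∫⁻ x, ‖h2 x‖ₑ ^ 2) := by
        simp only [enorm_neg]
        rw [lintegral_add_right_eq_self (fun x => ‖h x‖ₑ ^ 2)]
        refine mul_le_mul_right (add_le_add_right ?_ _) _
        simpa using h3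
    _ ≤ 3 * ((∫⁻ x, ‖h x‖ₑ ^ 2) + (∫⁻ x, ‖h x‖ₑ ^ 2) +
        ((∫⁻ x, ‖h2 x‖ₑ ^ 2) + ∫⁻ x, ‖h2 x‖ₑ ^ 2)) := by
        gcongr; exact le_self_add
    _ = _ := by ring

lemma s16_taylor {f : ℝ → ℝ} (hf : ContDiff ℝ 2 f) {M : ℝ} (hM : ∀ x, |iteratedDeriv 2 f x| ≤ M)
    (x u : ℝ) : |f (x + u) - f x - u * deriv f x| ≤ M * u ^ 2 := by
  have hd : Differentiable ℝ f := hf.differentiable (by norm_num)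
  have hd1 : Differentiable ℝ (deriv f) := by
    have : ContDiff ℝ 1 (deriv f) := (contDiff_succ_iff_deriv (n := 1).1 (by norm_num; exact hf)).2.2
    exact this.differentiable (by norm_num)
  have e2 : iteratedDeriv 2 f = deriv (deriv f) := by
    rw [iteratedDeriv_succ, iteratedDeriv_one]
  rw [e2] at hM
  have hM0 : 0 ≤ M := (abs_nonneg _).trans (hM 0)
  have L1 : ∀ y, |deriv f y - deriv f x| ≤ M * |y - x| := by
    intro y
    exact Convex.norm_image_sub_le_of_norm_deriv_le (s := Set.univ) (fun z _ => hd1 z)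
      (fun z _ => hM z) convex_univ trivial trivial
  have L2 := Convex.norm_image_sub_le_of_norm_hasDerivWithin_le (s := Set.uIcc x (x + u))
    (f := fun y => f y - y * deriv f x) (f' := fun y => deriv f y - deriv f x) (C := M * |u|)
    (x := x) (y := x + u)
    (fun y _ => by
      have := (hd y).hasDerivAt.sub ((hasDerivAt_id y).mul_const (deriv f x))
      simp only [one_mul, id] at this
      exact this.hasDerivWithinAt)
    (fun y hy => by
      refine (L1 y).trans (mul_le_mul_of_nonneg_left ?_ hM0)
      have := Set.abs_sub_left_of_mem_uIcc hy
      simpa using this)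
    (convex_uIcc _ _) Set.left_mem_uIcc Set.right_mem_uIcc
  rw [Real.norm_eq_abs, Real.norm_eq_abs, add_sub_cancel_left, mul_assoc, abs_mul_abs_self, ← sq] at L2
  convert L2 using 2
  ring

/-- remainder -/
noncomputable def s16g (f f1 : ℝ → ℝ) (h h1 : ℝ → ℂ) (x : ℝ) (p : ℝ × ℝ) : ℂ :=
  ((f (x + p.1) - f x - p.1 * f1 x : ℝ) : ℂ) * h (x + p.2) +
  (f x : ℂ) * (h (x + p.2) - h x - p.2 * h1 x) +
  ((p.1 * f1 x : ℝ) : ℂ) * (h (x + p.2) - h x)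

lemma s16_lmul {a : ℝ → ℝ} {b : ℝ → ℂ} {c : ℝ} (ha : ∀ x, |a x| ≤ c) {B : ENNReal}
    (hb : ∫⁻ x, ‖b x‖ₑ ^ 2 ≤ B) :
    ∫⁻ x, ‖(a x : ℂ) * b x‖ₑ ^ 2 ≤ ENNReal.ofReal (c ^ 2) * B := by
  calc ∫⁻ x, ‖(a x : ℂ) * b x‖ₑ ^ 2 ≤ ∫⁻ x, ENNReal.ofReal (c ^ 2) * ‖b x‖ₑ ^ 2 := by
        refine lintegral_mono fun x => ?_
        simp only
        rw [enorm_mul, mul_pow]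
        gcongr
        rw [← ofReal_norm, ← ENNReal.ofReal_pow (norm_nonneg _)]
        apply ENNReal.ofReal_le_ofReal
        rw [Complex.norm_real, Real.norm_eq_abs]
        gcongr
        exact ha x
    _ = ENNReal.ofReal (c ^ 2) * ∫⁻ x, ‖b x‖ₑ ^ 2 := by
        rw [lintegral_const_mul' _ _ ENNReal.ofReal_ne_top]
    _ ≤ _ := by gcongr

lemma s16g_bound {f f1 : ℝ → ℝ} {h h1 h2 : ℝ → ℂ} (hf : Continuous f) (hf1 : Continuous f1)
    {M : ℝ} (hM : 0 ≤ M) (b0 : ∀ x, |f x| ≤ M) (b1 : ∀ x, |f1 x| ≤ M)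
    (b2 : ∀ x u, |f (x + u) - f x - u * f1 x| ≤ M * u ^ 2)
    (hd : ∀ x, HasDerivAt h (h1 x) x)
    (hd1 : ∀ x, HasDerivAt h1 (h2 x) x) (hc0 : Continuous h) (hc1 : Continuous h1)
    (hc : Continuous h2) (p : ℝ × ℝ) :
    ∫⁻ x, ‖s16g f f1 h h1 x p‖ₑ ^ 2 ≤ ENNReal.ofReal ((|p.1| + |p.2|) ^ 4) *
      (ENNReal.ofReal (24 * M ^ 2) * ((∫⁻ x, ‖h x‖ₑ ^ 2) + ∫⁻ x, ‖h2 x‖ₑ ^ 2)) := by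
  obtain ⟨u, v⟩ := p
  simp only [s16g]
  set A := ∫⁻ x, ‖h x‖ₑ ^ 2 with hA
  set A2 := ∫⁻ x, ‖h2 x‖ₑ ^ 2 with hA2
  refine (s16_lsq3 (by fun_prop) (by fun_prop)).trans ?_
  have i1 := s16_lmul (a := fun x => f (x + u) - f x - u * f1 x) (b := fun x => h (x + v)) (fun x => b2 x u)
    (B := A) (by rw [lintegral_add_right_eq_self (fun x => ‖h x‖ₑ ^ 2)])
  have i2 := s16_lmul (a := f) b0 (s16_shift2 hd hd1 hc1 hc v)
  have i3 := s16_lmul (a := fun x => u * f1 x) (c := |u| * M)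
    (fun x => by rw [abs_mul]; exact mul_le_mul_of_nonneg_left (b1 x) (abs_nonneg _))
    ((s16_shift1 hd hc1 v).trans (mul_le_mul_right (s16_interp hd hd1 hc0 hc1 hc) _))
  rw [← hA, ← hA2] at i3
  rw [← hA2] at i2
  rw [← mul_assoc, ← ENNReal.ofReal_mul (by positivity)] at i2 i3
  set r := |u| + |v| with hr
  have hu : |u| ≤ r := by rw [hr]; linarith [abs_nonneg v]
  have hv : |v| ≤ r := by rw [hr]; linarith [abs_nonneg u]
  have hr0 : 0 ≤ r := by positivity
  set P := ENNReal.ofReal (r ^ 4 * M ^ 2) with hP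
  have j1 : ENNReal.ofReal ((M * u ^ 2) ^ 2) ≤ P := by
    apply ENNReal.ofReal_le_ofReal
    have : (M * u ^ 2) ^ 2 = |u| ^ 4 * M ^ 2 := by
      rw [show |u| ^ 4 = (|u| ^ 2) ^ 2 by ring, sq_abs]; ring
    rw [this]; gcongr
  have j2 : ENNReal.ofReal (M ^ 2 * v ^ 4) ≤ P := by
    apply ENNReal.ofReal_le_ofReal
    have : M ^ 2 * v ^ 4 = |v| ^ 4 * M ^ 2 := by
      rw [show |v| ^ 4 = (|v| ^ 2) ^ 2 by ring, sq_abs]; ring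
    rw [this]; gcongr
  have j3 : ENNReal.ofReal ((|u| * M) ^ 2 * v ^ 2) ≤ P := by
    apply ENNReal.ofReal_le_ofReal
    have : (|u| * M) ^ 2 * v ^ 2 = |u| ^ 2 * |v| ^ 2 * M ^ 2 := by
      rw [sq_abs v]; ring
    rw [this, show r ^ 4 = r ^ 2 * r ^ 2 by ring]; gcongr
  have e : ENNReal.ofReal (r ^ 4) * (ENNReal.ofReal (24 * M ^ 2) * (A + A2)) = 24 * (P * (A + A2)) := by
    rw [hP, ENNReal.ofReal_mul (by positivity), ENNReal.ofReal_mul (by positivity)]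
    simp only [ENNReal.ofReal_ofNat]
    ring
  rw [e]
  calc _ ≤ 3 * (P * A + P * A2 + P * (6 * (A + A2))) := by
        refine mul_le_mul_right (add_le_add (add_le_add ?_ ?_) ?_) _
        · exact i1.trans (mul_le_mul_left j1 _)
        · exact i2.trans (mul_le_mul_left j2 _)
        · exact i3.trans (mul_le_mul_left j3 _)
    _ = 21 * (P * (A + A2)) := by ring
    _ ≤ _ := by gcongr; norm_num

lemma s16_ident {f f1 : ℝ → ℝ} {h h1 : ℝ → ℂ} (hf : Continuous f) (hc0 : Continuous h)
    {M Bh κ : ℝ} (b0 : ∀ x, |f x| ≤ M) (hB : ∀ x, ‖h x‖ ≤ Bh) (hκ : 0 < κ) (x : ℝ) :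
    (16 * (κ : ℂ) ^ 5) *
            (∫ p : ℝ × ℝ,
              ((((2 * κ)⁻¹ * Real.exp (-κ * |x - p.1|)) * f p.1 *
                ((2 * κ)⁻¹ * Real.exp (-κ * |p.1 - p.2|)) *
                ((2 * κ)⁻¹ * Real.exp (-κ * |p.2 - x|)) : ℝ) : ℂ) * h p.2) -
          3 * (f x : ℂ) * h x =
    ((2 * κ ^ 2 : ℝ) : ℂ) * ∫ p : ℝ × ℝ, (s16K κ p : ℂ) * s16g f f1 h h1 x p := by
  have hM : 0 ≤ M := (abs_nonneg _).trans (b0 0)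
  have hBh : 0 ≤ Bh := (norm_nonneg _).trans (hB 0)
  have s1 : (∫ p : ℝ × ℝ,
              ((((2 * κ)⁻¹ * Real.exp (-κ * |x - p.1|)) * f p.1 *
                ((2 * κ)⁻¹ * Real.exp (-κ * |p.1 - p.2|)) *
                ((2 * κ)⁻¹ * Real.exp (-κ * |p.2 - x|)) : ℝ) : ℂ) * h p.2) =
      (((2 * κ)⁻¹ ^ 3 : ℝ) : ℂ) * ∫ p : ℝ × ℝ, (s16K κ p : ℂ) * (f (x + p.1) * h (x + p.2)) := by
    rw [← integral_add_left_eq_self _ ((x, x) : ℝ × ℝ), ← integral_const_mul]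
    congr 1; ext p
    simp only [Prod.fst_add, Prod.snd_add, add_sub_add_left_eq_sub, add_sub_cancel_left,
      sub_add_cancel_left, abs_neg, s16K]
    rw [show -κ * (|p.1| + |p.1 - p.2| + |p.2|) = -κ * |p.1| + -κ * |p.1 - p.2| + -κ * |p.2| by ring,
      Real.exp_add, Real.exp_add]
    push_cast
    ring
  have hKi := s16K_integrable hκ
  have I1 : Integrable (fun p : ℝ × ℝ => (s16K κ p : ℂ) * (f (x + p.1) * h (x + p.2))) := by
    refine (hKi.mul_const (M * Bh)).mono' ?_ (Filter.Eventually.of_forall fun p => ?_)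
    · have := s16K_cont κ
      exact Continuous.aestronglyMeasurable (by fun_prop)
    · rw [norm_mul, norm_mul, Complex.norm_real, Complex.norm_real,
        Real.norm_of_nonneg (s16K_nonneg _ _), Real.norm_eq_abs]
      exact mul_le_mul_of_nonneg_left (mul_le_mul (b0 _) (hB _) (norm_nonneg _) hM) (s16K_nonneg _ _)
  have I2 : Integrable (fun p : ℝ × ℝ => (s16K κ p : ℂ) * (f x * h x)) :=
    hKi.ofReal.mul_const _
  set a : ℂ := f1 x * h x
  set b : ℂ := f x * h1 x
  have I3 : Integrable (fun p : ℝ × ℝ => (s16K κ p : ℂ) * (p.1 * a + p.2 * b)) := by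
    have hi := ((s16_integrable2 (half_pos hκ)).const_mul ((Nat.factorial 1 : ℕ) * (2 / κ) ^ 1)).mul_const
      (‖a‖ + ‖b‖)
    refine hi.mono' ?_ (Filter.Eventually.of_forall fun p => ?_)
    · have := s16K_cont κ
      exact Continuous.aestronglyMeasurable (by fun_prop)
    · refine le_trans ?_ (mul_le_mul_of_nonneg_right (s16K_pow hκ 1 p) (by positivity))
      rw [norm_mul, Complex.norm_real, Real.norm_of_nonneg (s16K_nonneg _ _), mul_assoc]
      refine mul_le_mul_of_nonneg_left ?_ (s16K_nonneg _ _)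
      refine (norm_add_le _ _).trans ?_
      rw [norm_mul (p.1 : ℂ) a, norm_mul (p.2 : ℂ) b, Complex.norm_real, Complex.norm_real,
        Real.norm_eq_abs, Real.norm_eq_abs, pow_one]
      nlinarith [mul_nonneg (abs_nonneg p.1) (norm_nonneg b), mul_nonneg (abs_nonneg p.2) (norm_nonneg a)]
  have Z : ∫ p : ℝ × ℝ, (s16K κ p : ℂ) * (p.1 * a + p.2 * b) = 0 := by
    have h1 := integral_neg_eq_self (fun p : ℝ × ℝ => (s16K κ p : ℂ) * (p.1 * a + p.2 * b)) volume
    have h2 : ∀ p : ℝ × ℝ, (s16K κ (-p) : ℂ) * (((-p).1 : ℝ) * a + ((-p).2 : ℝ) * b)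
        = -((s16K κ p : ℂ) * (p.1 * a + p.2 * b)) := by
      intro p
      have : s16K κ (-p) = s16K κ p := by
        unfold s16K
        simp only [Prod.fst_neg, Prod.snd_neg, abs_neg]
        rw [← abs_neg (-p.1 - -p.2)]
        congr 6; ring
      rw [this]
      simp only [Prod.fst_neg, Prod.snd_neg]
      push_cast; ring
    simp only [h2] at h1
    rw [integral_neg] at h1
    exact self_eq_neg.1 h1.symm
  have s2 : ∫ p : ℝ × ℝ, (s16K κ p : ℂ) * s16g f f1 h h1 x p =
      (∫ p : ℝ × ℝ, (s16K κ p : ℂ) * (f (x + p.1) * h (x + p.2))) -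
       ((3 / (2 * κ ^ 2) : ℝ) : ℂ) * (f x * h x) := by
    have : ∀ p : ℝ × ℝ, (s16K κ p : ℂ) * s16g f f1 h h1 x p =
        (s16K κ p : ℂ) * (f (x + p.1) * h (x + p.2)) - (s16K κ p : ℂ) * (f x * h x)
          - (s16K κ p : ℂ) * (p.1 * a + p.2 * b) := by
      intro p; unfold s16g; simp only [a, b]; push_cast; ring
    simp only [this]
    rw [integral_sub (by exact I1.sub I2) I3, integral_sub I1 I2, Z, sub_zero, integral_mul_const,
      integral_complex_ofReal, s16K_int hκ]
  rw [s1, s2]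
  have hk : (κ : ℂ) ≠ 0 := by exact_mod_cast hκ.ne'
  push_cast
  field_simp
  ring

lemma s16_main {f f1 : ℝ → ℝ} {h h1 h2 : ℝ → ℂ} (hf : Continuous f) (hf1 : Continuous f1)
    {M κ : ℝ} (hM : 0 ≤ M) (b0 : ∀ x, |f x| ≤ M) (b1 : ∀ x, |f1 x| ≤ M)
    (b2 : ∀ x u, |f (x + u) - f x - u * f1 x| ≤ M * u ^ 2)
    (hd : ∀ x, HasDerivAt h (h1 x) x)
    (hd1 : ∀ x, HasDerivAt h1 (h2 x) x) (hc0 : Continuous h) (hc1 : Continuous h1)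
    (hc : Continuous h2) (hκ : 0 < κ) :
    ∫⁻ x, ‖((2 * κ ^ 2 : ℝ) : ℂ) * ∫ p : ℝ × ℝ, (s16K κ p : ℂ) * s16g f f1 h h1 x p‖ₑ ^ 2 ≤
      ENNReal.ofReal ((3072 * (κ ^ 2)⁻¹ * M) ^ 2) *
        ((∫⁻ x, ‖h x‖ₑ ^ 2) + ∫⁻ x, ‖h2 x‖ₑ ^ 2) := by
  set S := (∫⁻ x, ‖h x‖ₑ ^ 2) + ∫⁻ x, ‖h2 x‖ₑ ^ 2 with hS
  have hKn : ∀ p, ‖(s16K κ p : ℂ)‖ₑ = ENNReal.ofReal (s16K κ p) := by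
    intro p
    rw [← ofReal_norm, Complex.norm_real, Real.norm_of_nonneg (s16K_nonneg _ _)]
  have hcn : ‖((2 * κ ^ 2 : ℝ) : ℂ)‖ₑ ^ 2 = ENNReal.ofReal (4 * κ ^ 4) := by
    rw [← ofReal_norm, Complex.norm_real, Real.norm_of_nonneg (by positivity),
      ← ENNReal.ofReal_pow (by positivity)]
    congr 1; ring
  have hwm : Measurable fun p => ENNReal.ofReal (s16K κ p) :=
    (s16K_cont κ).measurable.ennreal_ofReal
  have hgm : Measurable (Function.uncurry fun x p => ‖s16g f f1 h h1 x p‖ₑ) := by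
    apply Measurable.enorm
    apply Continuous.measurable
    unfold s16g
    fun_prop
  have k1 : ∫⁻ p, ENNReal.ofReal (s16K κ p) ≤ ENNReal.ofReal (4 / κ ^ 2) := by
    rw [← ofReal_integral_eq_lintegral_ofReal (s16K_integrable hκ)
      (Filter.Eventually.of_forall (s16K_nonneg κ)), s16K_int hκ]
    apply ENNReal.ofReal_le_ofReal
    rw [div_le_div_iff₀ (by positivity) (by positivity)]
    nlinarith [sq_nonneg κ]
  have k2 : ∫⁻ p : ℝ × ℝ, ENNReal.ofReal (s16K κ p) * ENNReal.ofReal ((|p.1| + |p.2|) ^ 4) ≤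
      ENNReal.ofReal (6144 / κ ^ 6) := by
    have hi := (s16_integrable2 (half_pos hκ)).const_mul ((Nat.factorial 4 : ℕ) * (2 / κ) ^ 4)
    calc _ ≤ ∫⁻ p : ℝ × ℝ, ENNReal.ofReal ((Nat.factorial 4 : ℕ) * (2 / κ) ^ 4 *
            Real.exp (-(κ / 2) * (|p.1| + |p.2|))) := by
          refine lintegral_mono fun p => ?_
          simp only
          rw [← ENNReal.ofReal_mul (s16K_nonneg _ _)]
          exact ENNReal.ofReal_le_ofReal (s16K_pow hκ 4 p)
      _ = _ := by
          rw [← ofReal_integral_eq_lintegral_ofReal hi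
            (Filter.Eventually.of_forall fun p => by positivity), integral_const_mul,
            s16_int2 (half_pos hκ)]
          congr 1
          simp only [Nat.factorial]
          push_cast
          field_simp
          norm_num
  calc _ ≤ ∫⁻ x, ENNReal.ofReal (4 * κ ^ 4) *
        (∫⁻ p, ENNReal.ofReal (s16K κ p) * ‖s16g f f1 h h1 x p‖ₑ) ^ 2 := by
        refine lintegral_mono fun x => ?_
        simp only
        rw [enorm_mul, mul_pow, hcn]
        gcongr
        refine (enorm_integral_le_lintegral_enorm _).trans (le_of_eq ?_)
        refine lintegral_congr fun p => ?_
        rw [enorm_mul, hKn]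
    _ = ENNReal.ofReal (4 * κ ^ 4) *
        ∫⁻ x, (∫⁻ p, ENNReal.ofReal (s16K κ p) * ‖s16g f f1 h h1 x p‖ₑ) ^ 2 := by
        rw [lintegral_const_mul' _ _ ENNReal.ofReal_ne_top]
    _ ≤ ENNReal.ofReal (4 * κ ^ 4) * ((∫⁻ p, ENNReal.ofReal (s16K κ p)) *
          ∫⁻ p, ENNReal.ofReal (s16K κ p) * ∫⁻ x, ‖s16g f f1 h h1 x p‖ₑ ^ 2) :=
        mul_le_mul_right (s16_mink volume hwm hgm) _
    _ ≤ ENNReal.ofReal (4 * κ ^ 4) * (ENNReal.ofReal (4 / κ ^ 2) *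
          ∫⁻ p : ℝ × ℝ, ENNReal.ofReal (s16K κ p) * (ENNReal.ofReal ((|p.1| + |p.2|) ^ 4) *
            (ENNReal.ofReal (24 * M ^ 2) * S))) := by
        refine mul_le_mul_right (mul_le_mul' k1 (lintegral_mono fun p => mul_le_mul_right ?_ _)) _
        exact s16g_bound hf hf1 hM b0 b1 b2 hd hd1 hc0 hc1 hc p
    _ = ENNReal.ofReal (4 * κ ^ 4) * (ENNReal.ofReal (4 / κ ^ 2) *
          ((∫⁻ p : ℝ × ℝ, ENNReal.ofReal (s16K κ p) * ENNReal.ofReal ((|p.1| + |p.2|) ^ 4)) *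
            (ENNReal.ofReal (24 * M ^ 2) * S))) := by
        simp only [← mul_assoc (ENNReal.ofReal (s16K κ _))]
        rw [lintegral_mul_const]
        exact hwm.mul (Continuous.measurable (by fun_prop)).ennreal_ofReal
    _ ≤ ENNReal.ofReal (4 * κ ^ 4) * (ENNReal.ofReal (4 / κ ^ 2) *
          (ENNReal.ofReal (6144 / κ ^ 6) * (ENNReal.ofReal (24 * M ^ 2) * S))) := by
        gcongr
    _ = ENNReal.ofReal ((4 * κ ^ 4) * ((4 / κ ^ 2) * ((6144 / κ ^ 6) * (24 * M ^ 2)))) * S := by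
        rw [ENNReal.ofReal_mul (p := 4 * κ ^ 4) (by positivity),
          ENNReal.ofReal_mul (p := 4 / κ ^ 2) (by positivity),
          ENNReal.ofReal_mul (p := 6144 / κ ^ 6) (by positivity)]
        simp only [mul_assoc]
    _ ≤ _ := by
        gcongr
        have : (4 * κ ^ 4) * ((4 / κ ^ 2) * ((6144 / κ ^ 6) * (24 * M ^ 2)))
            = 2359296 * ((κ ^ 2)⁻¹ * M) ^ 2 := by
          field_simp; ring
        rw [this]
        nlinarith [sq_nonneg ((κ ^ 2)⁻¹ * M)]

lemma s16_schwartz_sq (h : SchwartzMap ℝ ℂ) :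
    ∫⁻ x, ‖h x‖ₑ ^ 2 = ENNReal.ofReal (∫ x, ‖h x‖ ^ 2) := by
  have : Integrable (fun x => ‖h x‖ ^ 2) :=
    MemLp.integrable_norm_pow (p := 2) (h.memLp 2 volume) (by norm_num)
  rw [ofReal_integral_eq_lintegral_ofReal this (Filter.Eventually.of_forall fun p => by positivity)]
  refine lintegral_congr fun x => ?_
  rw [ENNReal.ofReal_pow (norm_nonneg _), ofReal_norm]

lemma s16_int_le {F : ℝ → ℂ} {c : ℝ} (hc : 0 ≤ c) (h : ∫⁻ x, ‖F x‖ₑ ^ 2 ≤ ENNReal.ofReal c) :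
    ∫ x, ‖F x‖ ^ 2 ≤ c := by
  by_cases hi : Integrable (fun x => ‖F x‖ ^ 2)
  · rw [← ENNReal.ofReal_le_ofReal_iff hc, ofReal_integral_eq_lintegral_ofReal hi
      (Filter.Eventually.of_forall fun p => by positivity)]
    refine le_trans (le_of_eq (lintegral_congr fun x => ?_)) h
    rw [ENNReal.ofReal_pow (norm_nonneg _), ofReal_norm]
  · rw [integral_undef hi]; exact hc

/-- `‖16κ⁵⟨δₓ, R₀ f R₀ h R₀ δₓ⟩ − 3fh‖_{L²} ≲ κ^{-2} ‖f‖_{W^{2,∞}} ‖h‖_{H²}`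
uniformly for `κ ≥ 1`, with the operator written out with kernels. -/
theorem stmt16 : ∃ C : ℝ, 0 < C ∧ ∀ κ : ℝ, 1 ≤ κ → ∀ f : ℝ → ℝ, ContDiff ℝ 2 f →
    BddAbove (Set.range fun x => |f x|) →
    BddAbove (Set.range fun x => |deriv f x|) →
    BddAbove (Set.range fun x => |iteratedDeriv 2 f x|) →
    ∀ h : SchwartzMap ℝ ℂ,
    Real.sqrt (∫ x : ℝ,
        ‖(16 * (κ : ℂ) ^ 5) *
            (∫ p : ℝ × ℝ,
              ((((2 * κ)⁻¹ * Real.exp (-κ * |x - p.1|)) * f p.1 *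
                ((2 * κ)⁻¹ * Real.exp (-κ * |p.1 - p.2|)) *
                ((2 * κ)⁻¹ * Real.exp (-κ * |p.2 - x|)) : ℝ) : ℂ) * h p.2) -
          3 * (f x : ℂ) * h x‖ ^ 2) ≤
      C * (κ ^ 2)⁻¹ *
        ((⨆ x : ℝ, |f x|) + (⨆ x : ℝ, |deriv f x|) + ⨆ x : ℝ, |iteratedDeriv 2 f x|) *
        (Real.sqrt (∫ x : ℝ, ‖h x‖ ^ 2) +
          Real.sqrt (∫ x : ℝ, ‖iteratedDeriv 2 (⇑h) x‖ ^ 2)) := by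
  refine ⟨3072, by norm_num, ?_⟩
  intro κ hκ1 f hf hb0 hb1 hb2 h
  have hκ : 0 < κ := by linarith
  have n0 : 0 ≤ ⨆ x : ℝ, |f x| := Real.iSup_nonneg fun _ => abs_nonneg _
  have n1 : 0 ≤ ⨆ x : ℝ, |deriv f x| := Real.iSup_nonneg fun _ => abs_nonneg _
  have n2 : 0 ≤ ⨆ x : ℝ, |iteratedDeriv 2 f x| := Real.iSup_nonneg fun _ => abs_nonneg _
  have c0 : ∀ x, |f x| ≤ ⨆ x : ℝ, |f x| := fun x => le_ciSup hb0 x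
  have c1 : ∀ x, |deriv f x| ≤ ⨆ x : ℝ, |deriv f x| := fun x => le_ciSup hb1 x
  have c2 : ∀ x, |iteratedDeriv 2 f x| ≤ ⨆ x : ℝ, |iteratedDeriv 2 f x| := fun x => le_ciSup hb2 x
  set M := (⨆ x : ℝ, |f x|) + (⨆ x : ℝ, |deriv f x|) + ⨆ x : ℝ, |iteratedDeriv 2 f x| with hMdef
  have hM : 0 ≤ M := by positivity
  have b0 : ∀ x, |f x| ≤ M := fun x => (c0 x).trans (by linarith)
  have b1 : ∀ x, |deriv f x| ≤ M := fun x => (c1 x).trans (by linarith)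
  have b2 := s16_taylor hf (M := M) fun x => (c2 x).trans (by linarith)
  set g1 : SchwartzMap ℝ ℂ := SchwartzMap.derivCLM ℂ ℂ h with hg1
  set g2 : SchwartzMap ℝ ℂ := SchwartzMap.derivCLM ℂ ℂ g1 with hg2
  have d1 : ∀ x, HasDerivAt h (g1 x) x := by
    intro x
    rw [hg1, SchwartzMap.derivCLM_apply]
    exact h.differentiableAt.hasDerivAt
  have d2 : ∀ x, HasDerivAt g1 (g2 x) x := by
    intro x
    rw [hg2, SchwartzMap.derivCLM_apply]
    exact g1.differentiableAt.hasDerivAt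
  have ei : iteratedDeriv 2 (⇑h) = ⇑g2 := by
    rw [iteratedDeriv_succ, iteratedDeriv_one]
    have : deriv (⇑h) = ⇑g1 := funext fun x => (d1 x).deriv
    rw [this]
    exact funext fun x => (d2 x).deriv
  rw [ei]
  have hf1 : Continuous (deriv f) := hf.continuous_deriv (by norm_num)
  obtain ⟨Bh, hBh⟩ : ∃ B, ∀ x, ‖h x‖ ≤ B :=
    ⟨_, fun x => h.toBoundedContinuousFunction.norm_coe_le_norm x⟩
  have key := s16_main (f := f) (f1 := deriv f) hf.continuous hf1 hM b0 b1 b2 d1 d2 h.continuous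
    g1.continuous g2.continuous hκ
  simp only [← s16_ident (f1 := deriv f) (h1 := g1) hf.continuous h.continuous b0 hBh hκ] at key
  rw [s16_schwartz_sq, s16_schwartz_sq] at key
  set A := ∫ x, ‖h x‖ ^ 2 with hA
  set A2 := ∫ x, ‖g2 x‖ ^ 2 with hA2
  have hA0 : 0 ≤ A := integral_nonneg fun _ => by positivity
  have hA20 : 0 ≤ A2 := integral_nonneg fun _ => by positivity
  rw [← ENNReal.ofReal_add hA0 hA20, ← ENNReal.ofReal_mul (by positivity)] at key
  apply Real.sqrt_le_iff.2 ⟨by positivity, ?_⟩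
  have fin : (3072 * (κ ^ 2)⁻¹ * M) ^ 2 * (A + A2) ≤
      (3072 * (κ ^ 2)⁻¹ * M * (Real.sqrt A + Real.sqrt A2)) ^ 2 := by
    rw [mul_pow _ (Real.sqrt A + Real.sqrt A2)]
    refine mul_le_mul_of_nonneg_left ?_ (by positivity)
    nlinarith [Real.sq_sqrt hA0, Real.sq_sqrt hA20, mul_nonneg (Real.sqrt_nonneg A) (Real.sqrt_nonneg A2)]
  refine le_trans ?_ fin
  exact s16_int_le (by positivity) key
end
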